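/- Assume the Riemann Hypothesis. Then for all x ≥ 100, |H(x)| ≤ ( 0.0462 / (√x·(log x)²) ) · ( 1 + 4/log x ). -/

import Mathlib

open Filter

/-- `R(x) = ∑_{n ≤ x} Λ(n)/n - log x + γ`. -/
noncomputable def Rfun (x : ℝ) : ℝ :=
  (∑ n ∈ Finset.Icc 1 ⌊x⌋₊, ArithmeticFunction.vonMangoldt n / n) -
    Real.log x + Real.eulerMascheroniConstant

/-- `H(x) = ∫_x^∞ R(t)/(t (log t)^2) dt`. -/
noncomputable def Hfun (x : ℝ) : ℝ :=
  ∫ t in Set.Ioi x, Rfun t / (t * (Real.log t) ^ 2)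

open Asymptotics Complex MeasureTheory Topology
open scoped ArithmeticFunction.vonMangoldt ComplexConjugate LSeries.notation

/-!
Under RH every zero of `ξ` has real part `1/2`, and a Phragmén–Lindelöf argument applied to
`ξ (1/2 - a + z) / ξ (1/2 + a + z)` on `0 ≤ re z` gives `|ξ (1/2 - a + z)| ≤ |ξ (1/2 + a + z)|`;
letting `a → 0` yields `0 ≤ re (ξ'/ξ (s))` for `1/2 < re s`.

The primitive `P` of `R(t)/t` is, up to a constant and trivial-zero terms of size `x⁻³`, an inverse
Mellin transform `∫ ξ'/ξ (s) x^(s-1) / (s-1)² ds` along a vertical line `re s = σ`. Adding the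
conjugate of `ξ'/ξ` does not change this integral, since the added part vanishes, and replaces
`ξ'/ξ` by `2 re (ξ'/ξ) ≥ 0`. Taking absolute values then costs nothing: what remains is the Poisson
integral of `re (ξ'/ξ)`, whose value is `re (ξ'/ξ (1)) = 1 + (γ - log (4π))/2`. With `σ → 1/2` this
gives `|P(x) - A| ≤ (2 + γ - log (4π))/√x + x⁻³/4` for some constant `A`, and `H` is bounded by
integrating `R(t)/(t log² t)` by parts.
-/

/-! ### Numerical value of `γ - log (4π)` -/

theorem two_mul_inv_add_cube_le_log_one_add_inv {a : ℝ} (ha : 0 < a) :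
    2 * (2 * a + 1)⁻¹ + 2 / 3 * (2 * a + 1)⁻¹ ^ 3 ≤ Real.log (1 + a⁻¹) := by
  have partialSum_le :=
    sum_le_hasSum (Finset.range 2) (fun i _ => by positivity) (Real.hasSum_log_one_add_inv ha)
  refine le_trans (le_of_eq ?_) partialSum_le
  simp only [Finset.sum_range_succ, Finset.sum_range_zero]
  push_cast
  field_simp
  ring

/-- The partial sum of the Euler–Maclaurin expansion of `γ` with two correction terms:
`H_n - log n - 1/(2n) + 1/(12n²)`. -/
noncomputable def eulerMaclaurinGamma (n : ℕ) : ℝ :=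
  harmonic n - Real.log n - (2 * (n : ℝ))⁻¹ + (12 * (n : ℝ) ^ 2)⁻¹

theorem tendsto_eulerMaclaurinGamma :
    Tendsto eulerMaclaurinGamma atTop (𝓝 Real.eulerMascheroniConstant) := by
  have linear_term : Tendsto (fun n : ℕ => (2 * n : ℝ)⁻¹) atTop (𝓝 0) :=
    (tendsto_natCast_atTop_atTop.const_mul_atTop two_pos).inv_tendsto_atTop
  have quadratic_term : Tendsto (fun n : ℕ => (12 * (n : ℝ) ^ 2)⁻¹) atTop (𝓝 0) :=
    (((tendsto_pow_atTop two_ne_zero).comp tendsto_natCast_atTop_atTop).const_mul_atTop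
      (by norm_num)).inv_tendsto_atTop
  have limit := (Real.tendsto_harmonic_sub_log.sub linear_term).add quadratic_term
  rwa [sub_zero, add_zero] at limit

theorem eulerMaclaurinGamma_succ_le {n : ℕ} (hn : 1 ≤ n) :
    eulerMaclaurinGamma (n + 1) ≤ eulerMaclaurinGamma n := by
  have n_pos : (0 : ℝ) < n := by exact_mod_cast hn
  have log_succ : Real.log (1 + (n : ℝ)⁻¹) = Real.log (n + 1) - Real.log n := by
    rw [← Real.log_div (by positivity) (by positivity)]
    congr 1
    field_simp
  have log_lower := two_mul_inv_add_cube_le_log_one_add_inv n_pos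
  rw [log_succ] at log_lower
  have difference_eq : 2 * (2 * (n : ℝ) + 1)⁻¹ + 2 / 3 * (2 * (n : ℝ) + 1)⁻¹ ^ 3 -
      ((n + 1 : ℝ)⁻¹ - (2 * (n + 1 : ℝ))⁻¹ + (12 * (n + 1 : ℝ) ^ 2)⁻¹
        + (2 * (n : ℝ))⁻¹ - (12 * (n : ℝ) ^ 2)⁻¹) =
      (2 * (n : ℝ) ^ 2 + 2 * n + 1) /
        (12 * (n : ℝ) ^ 2 * (n + 1) ^ 2 * (2 * n + 1) ^ 3) := by
    field_simp
    ring
  have difference_nonneg : 0 ≤ (2 * (n : ℝ) ^ 2 + 2 * n + 1) /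
      (12 * (n : ℝ) ^ 2 * (n + 1) ^ 2 * (2 * n + 1) ^ 3) := by positivity
  simp only [eulerMaclaurinGamma, harmonic_succ]
  push_cast
  linarith

theorem eulerMascheroniConstant_le_eulerMaclaurinGamma {n : ℕ} (hn : 1 ≤ n) :
    Real.eulerMascheroniConstant ≤ eulerMaclaurinGamma n := by
  have antitone : Antitone fun k => eulerMaclaurinGamma (k + n) :=
    antitone_nat_of_succ_le fun k => by
      rw [Nat.add_right_comm]
      exact eulerMaclaurinGamma_succ_le (by lia)
  simpa only [zero_add] using
    antitone.le_of_tendsto ((tendsto_add_atTop_iff_nat n).2 tendsto_eulerMaclaurinGamma) 0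

theorem lt_log_pi : 1.144729 < Real.log Real.pi := by
  rw [Real.lt_log_iff_exp_lt Real.pi_pos]
  have exp_frac : Real.exp 0.144729 ≤ 1.1557265 :=
    (Real.exp_bound' (n := 7) (by norm_num) (by norm_num) (by norm_num)).trans
      (by norm_num [Finset.sum_range_succ, Nat.factorial])
  calc Real.exp 1.144729 = Real.exp 1 * Real.exp 0.144729 := by
        rw [← Real.exp_add]
        norm_num
    _ ≤ 2.7182818286 * 1.1557265 := by gcongr; exact Real.exp_one_lt_d9.le
    _ < 3.141592 := by norm_num
    _ < Real.pi := Real.pi_gt_d6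

theorem eulerMascheroniConstant_sub_log_four_pi_le :
    Real.eulerMascheroniConstant - Real.log (4 * Real.pi) ≤ -1.9538065 := by
  have gamma_le := eulerMascheroniConstant_le_eulerMaclaurinGamma (n := 16) (by norm_num)
  have log_sixteen : Real.log (16 : ℕ) = 4 * Real.log 2 := by
    rw [show ((16 : ℕ) : ℝ) = 2 ^ 4 by norm_num, Real.log_pow]
    norm_num
  have log_four_pi : Real.log (4 * Real.pi) = 2 * Real.log 2 + Real.log Real.pi := by
    rw [Real.log_mul (by norm_num) Real.pi_ne_zero, show (4 : ℝ) = 2 ^ 2 by norm_num, Real.log_pow]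
    norm_num
  have harmonic_sixteen : (harmonic 16 : ℝ) = 2436559 / 720720 := by
    norm_num [harmonic, Finset.sum_range_succ]
  rw [eulerMaclaurinGamma, log_sixteen, harmonic_sixteen] at gamma_le
  rw [log_four_pi]
  norm_num at gamma_le
  linarith [lt_log_pi, Real.log_two_gt_d9]

/-! ### Integrals along vertical lines -/

/-- The polynomial weight `(1 + ‖z‖) ^ p` against which growth of functions on `ℂ` is measured. -/
noncomputable def growthWeight (p : ℝ) (z : ℂ) : ℝ := (1 + ‖z‖) ^ p

theorem growthWeight_pos (p : ℝ) (z : ℂ) : 0 < growthWeight p z := by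
  unfold growthWeight; positivity

theorem growthWeight_zero (z : ℂ) : growthWeight 0 z = 1 := Real.rpow_zero _

theorem norm_growthWeight (p : ℝ) (z : ℂ) : ‖growthWeight p z‖ = growthWeight p z :=
  Real.norm_of_nonneg (growthWeight_pos p z).le

theorem growthWeight_add (p q : ℝ) (z : ℂ) :
    growthWeight (p + q) z = growthWeight p z * growthWeight q z :=
  Real.rpow_add (by positivity) _ _

theorem continuous_growthWeight (p : ℝ) : Continuous (growthWeight p) :=
  Continuous.rpow_const (by fun_prop) fun z => Or.inl (by positivity)

theorem growthWeight_le_growthWeight {p q : ℝ} (hpq : p ≤ q) (z : ℂ) :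
    growthWeight p z ≤ growthWeight q z :=
  Real.rpow_le_rpow_of_exponent_le (by simp) hpq

theorem growthWeight_isBigO_growthWeight {p q : ℝ} (hpq : p ≤ q) (l : Filter ℂ) :
    growthWeight p =O[l] growthWeight q :=
  IsBigO.of_norm_le fun z => by
    simpa only [norm_growthWeight] using growthWeight_le_growthWeight hpq z

theorem isBigO_growthWeight_mul {f g : ℂ → ℂ} {p q r : ℝ} {l : Filter ℂ}
    (hf : f =O[l] growthWeight p) (hg : g =O[l] growthWeight q) (hr : p + q ≤ r) :
    (fun z => f z * g z) =O[l] growthWeight r :=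
  ((hf.mul hg).congr_right fun z => (growthWeight_add p q z).symm).trans
    (growthWeight_isBigO_growthWeight hr l)

theorem isBigO_const_growthWeight {p : ℝ} (hp : 0 ≤ p) (c : ℂ) (l : Filter ℂ) :
    (fun _ => c) =O[l] growthWeight p :=
  (isBigO_const_const c one_ne_zero l).trans <|
    (growthWeight_isBigO_growthWeight hp l).congr_left growthWeight_zero

theorem inv_sub_isBigO_growthWeight (p : ℂ) {r : ℝ} (hr : 0 < r) :
    (fun z => (z - p)⁻¹) =O[𝓟 {z | r ≤ ‖z - p‖}] growthWeight (-1) := by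
  refine isBigO_principal.2 ⟨(1 + ‖p‖) / r + 1, fun z hz => ?_⟩
  have sub_pos : 0 < ‖z - p‖ := hr.trans_le hz
  rw [norm_growthWeight, growthWeight, Real.rpow_neg_one, norm_inv, ← div_eq_mul_inv,
    inv_le_iff_one_le_mul₀ sub_pos, div_mul_eq_mul_div, one_le_div (by positivity)]
  calc 1 + ‖z‖ ≤ (1 + ‖p‖) * 1 + ‖z - p‖ := by linarith [norm_sub_norm_le z p]
    _ ≤ (1 + ‖p‖) * (‖z - p‖ / r) + ‖z - p‖ := by
        gcongr
        exact (one_le_div hr).2 hz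
    _ = ((1 + ‖p‖) / r + 1) * ‖z - p‖ := by ring

theorem inv_sub_isBigO_growthWeight_of_lt_re {p : ℂ} {a : ℝ} (ha : p.re < a) :
    (fun z => (z - p)⁻¹) =O[𝓟 {z | a ≤ z.re}] growthWeight (-1) := by
  refine (inv_sub_isBigO_growthWeight p (sub_pos.2 ha)).mono (principal_mono.2 fun z hz => ?_)
  exact (sub_le_sub_right hz.out _).trans (by simpa using re_le_norm (z - p))

theorem inv_sub_isBigO_growthWeight_of_re_lt {p : ℂ} {a : ℝ} (ha : a < p.re) :
    (fun z => (z - p)⁻¹) =O[𝓟 {z | z.re ≤ a}] growthWeight (-1) := by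
  refine (inv_sub_isBigO_growthWeight p (sub_pos.2 ha)).mono (principal_mono.2 fun z hz => ?_)
  exact (sub_le_sub_left hz.out _).trans (by simpa [norm_sub_rev] using re_le_norm (p - z))

theorem isBigO_growthWeight_of_away {S : Set ℂ} (hS : IsClosed S) {f : ℂ → ℂ}
    (hf : ContinuousOn f S) (p : ℂ) {q r : ℝ}
    (hO : f =O[𝓟 (S ∩ {z | r ≤ ‖z - p‖})] growthWeight q) :
    f =O[𝓟 S] growthWeight q := by
  have isCompact_near : IsCompact (S ∩ Metric.closedBall p r) :=
    (isCompact_closedBall p r).inter_left hS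
  have near : f =O[𝓟 (S ∩ Metric.closedBall p r)] growthWeight q :=
    ((hf.mono Set.inter_subset_left).isBigO_principal isCompact_near
      (c := (1 : ℝ)) (by simp)).trans
      ((continuous_growthWeight q).continuousOn.isBigO_rev_principal isCompact_near
        (fun z _ => (growthWeight_pos q z).ne') 1)
  refine (hO.sup near).mono ?_
  rw [sup_principal, principal_mono]
  intro z hz
  rcases le_total r ‖z - p‖ with far | close
  · exact Or.inl ⟨hz, far⟩
  · exact Or.inr ⟨hz, by rwa [mem_closedBall_iff_norm]⟩

theorem growthWeight_le_of_abs_le_norm {p u : ℝ} (hp : p ≤ 0) {z : ℂ} (hu : |u| ≤ ‖z‖) :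
    growthWeight p z ≤ (1 + ‖u‖) ^ p :=
  Real.rpow_le_rpow_of_nonpos (by positivity) (by gcongr; exact hu) hp

theorem tendsto_rpow_one_add_norm_cobounded {E : Type*} [SeminormedAddGroup E] {p : ℝ}
    (hp : p < 0) : Tendsto (fun u : E => (1 + ‖u‖) ^ p) (Bornology.cobounded E) (𝓝 0) := by
  have limit := (tendsto_rpow_neg_atTop (neg_pos.2 hp)).comp
    (tendsto_atTop_add_const_left _ 1 (tendsto_norm_cobounded_atTop (E := E)))
  rwa [neg_neg] at limit

theorem integrable_rpow_one_add_norm {p : ℝ} (hp : p < -1) :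
    Integrable fun y : ℝ => (1 + ‖y‖) ^ p := by
  simpa only [neg_neg] using integrable_one_add_norm (E := ℝ) (μ := volume) (r := -p)
    (by rw [Module.finrank_self]; push_cast; linarith)

theorem integrable_vertical {f : ℂ → ℂ} {S : Set ℂ} {a p : ℝ} (hp : p < -1)
    (hS : ∀ y : ℝ, a + y * I ∈ S) (hf : ContinuousOn f S) (hO : f =O[𝓟 S] growthWeight p) :
    Integrable fun y : ℝ => f (a + y * I) := by
  obtain ⟨C, C_pos, norm_le⟩ := hO.exists_pos
  refine ((integrable_rpow_one_add_norm hp).const_mul C).mono'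
    (hf.comp_continuous (by fun_prop) hS).aestronglyMeasurable (.of_forall fun y => ?_)
  refine (isBigOWith_principal.1 norm_le _ (hS y)).trans ?_
  rw [norm_growthWeight]
  gcongr
  exact growthWeight_le_of_abs_le_norm (by linarith) (by simpa using abs_im_le_norm (a + y * I))

theorem tendsto_integral_horizontal {f : ℂ → ℂ} {a b p : ℝ} (hab : a ≤ b) (hp : p < 0)
    (hO : f =O[𝓟 {z | a ≤ z.re ∧ z.re ≤ b}] growthWeight p) :
    Tendsto (fun T : ℝ => ∫ x : ℝ in a..b, f (x + T * I)) (Bornology.cobounded ℝ) (𝓝 0) := by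
  obtain ⟨C, C_pos, norm_le⟩ := hO.exists_pos
  have bound_tendsto : Tendsto (fun T : ℝ => C * (1 + ‖T‖) ^ p * |b - a|)
      (Bornology.cobounded ℝ) (𝓝 0) := by
    simpa only [mul_zero, zero_mul] using
      ((tendsto_rpow_one_add_norm_cobounded hp).const_mul C).mul_const |b - a|
  refine squeeze_zero_norm (fun T => ?_) bound_tendsto
  refine intervalIntegral.norm_integral_le_of_norm_le_const fun x hx => ?_
  rw [Set.uIoc_of_le hab] at hx
  refine (isBigOWith_principal.1 norm_le _ (by simpa using ⟨hx.1.le, hx.2⟩)).trans ?_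
  rw [norm_growthWeight]
  gcongr
  exact growthWeight_le_of_abs_le_norm hp.le (by simpa using abs_im_le_norm (x + T * I))

theorem integral_vertical_sub_integral_vertical {f : ℂ → ℂ} {a b : ℝ} (hab : a ≤ b)
    (hf : DifferentiableOn ℂ f {z | a ≤ z.re ∧ z.re ≤ b}) (T : ℝ) :
    (∫ y : ℝ in -T..T, f (b + y * I)) - ∫ y : ℝ in -T..T, f (a + y * I) =
      I * ((∫ x : ℝ in a..b, f (x + (-T : ℝ) * I)) - ∫ x : ℝ in a..b, f (x + T * I)) := by
  have boundary_eq_zero := integral_boundary_rect_eq_zero_of_differentiableOn f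
    (a + (-T : ℝ) * I) (b + T * I) (hf.mono fun z hz => by
      simpa [Set.uIcc_of_le hab] using hz.1)
  simp only [add_re, ofReal_re, mul_re, I_re, mul_zero, ofReal_im, I_im, mul_one, sub_self,
    add_zero, add_im, mul_im, zero_add, smul_eq_mul] at boundary_eq_zero
  linear_combination (-I) * boundary_eq_zero + ((∫ y : ℝ in -T..T, f (b + y * I)) -
    ∫ y : ℝ in -T..T, f (a + y * I)) * I_mul_I

theorem integral_vertical_eq_of_differentiableOn {f : ℂ → ℂ} {a b p : ℝ} (hab : a ≤ b)
    (hp : p < -1) (hf : DifferentiableOn ℂ f {z | a ≤ z.re ∧ z.re ≤ b})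
    (hO : f =O[𝓟 {z | a ≤ z.re ∧ z.re ≤ b}] growthWeight p) :
    ∫ y : ℝ, f (a + y * I) = ∫ y : ℝ, f (b + y * I) := by
  have truncations_tendsto {c : ℝ} (hc : a ≤ c ∧ c ≤ b) :
      Tendsto (fun T : ℝ => ∫ y : ℝ in -T..T, f (c + y * I)) atTop
        (𝓝 (∫ y : ℝ, f (c + y * I))) :=
    intervalIntegral_tendsto_integral
      (integrable_vertical hp (by simpa using hc) hf.continuousOn hO)
      tendsto_neg_atTop_atBot tendsto_id
  have horizontal := tendsto_integral_horizontal hab (by linarith) hO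
  have bottom := horizontal.comp
    (tendsto_neg_atTop_atBot.mono_right IsOrderBornology.atBot_le_cobounded)
  have top := horizontal.comp (tendsto_id.mono_right IsOrderBornology.atTop_le_cobounded)
  have boundary := (bottom.sub top).const_mul I
  simp only [sub_zero, mul_zero] at boundary
  refine (sub_eq_zero.1 (tendsto_nhds_unique ?_ boundary)).symm
  exact ((truncations_tendsto ⟨hab, le_rfl⟩).sub (truncations_tendsto ⟨le_rfl, hab⟩)).congr
    (integral_vertical_sub_integral_vertical hab hf)

theorem tendsto_integral_vertical_atTop {f : ℂ → ℂ} {a p : ℝ} (hp : p < -1)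
    (hf : ContinuousOn f {z | a ≤ z.re}) (hO : f =O[𝓟 {z | a ≤ z.re}] growthWeight p) :
    Tendsto (fun b : ℝ => ∫ y : ℝ, f (b + y * I)) atTop (𝓝 0) := by
  obtain ⟨C, C_pos, norm_le⟩ := hO.exists_pos
  have norm_apply_le {b u : ℝ} (hb : a ≤ b) (y : ℝ) (hu : |u| ≤ ‖(b + y * I : ℂ)‖) :
      ‖f (b + y * I)‖ ≤ C * (1 + ‖u‖) ^ p := by
    refine (isBigOWith_principal.1 norm_le (b + y * I) (by simpa using hb)).trans ?_
    rw [norm_growthWeight]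
    gcongr
    exact growthWeight_le_of_abs_le_norm (by linarith) hu
  rw [← integral_zero ℝ ℂ]
  refine tendsto_integral_filter_of_dominated_convergence (fun y => C * (1 + ‖y‖) ^ p)
    ?_ ?_ ((integrable_rpow_one_add_norm hp).const_mul C) (.of_forall fun y => ?_)
  · filter_upwards [eventually_ge_atTop a] with b hb
    exact (hf.comp_continuous (by fun_prop) (by simpa using hb)).aestronglyMeasurable
  · filter_upwards [eventually_ge_atTop a] with b hb
    exact .of_forall fun y => norm_apply_le hb y (by simpa using abs_im_le_norm (b + y * I))
  · have bound_tendsto : Tendsto (fun b : ℝ => C * (1 + ‖b‖) ^ p) atTop (𝓝 0) := by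
      simpa only [mul_zero] using ((tendsto_rpow_one_add_norm_cobounded (by linarith)).mono_left
        IsOrderBornology.atTop_le_cobounded).const_mul C
    refine squeeze_zero_norm' ?_ bound_tendsto
    filter_upwards [eventually_ge_atTop a] with b hb
    exact norm_apply_le hb y (by simpa using abs_re_le_norm (b + y * I))

theorem integral_vertical_eq_zero {f : ℂ → ℂ} {a p : ℝ} (hp : p < -1)
    (hf : DifferentiableOn ℂ f {z | a ≤ z.re}) (hO : f =O[𝓟 {z | a ≤ z.re}] growthWeight p) :
    ∫ y : ℝ, f (a + y * I) = 0 := by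
  have strip_subset (b : ℝ) : {z : ℂ | a ≤ z.re ∧ z.re ≤ b} ⊆ {z | a ≤ z.re} := fun z hz => hz.1
  refine tendsto_nhds_unique (tendsto_const_nhds.congr' ?_)
    (tendsto_integral_vertical_atTop hp hf.continuousOn hO)
  filter_upwards [eventually_ge_atTop a] with b hb
  exact integral_vertical_eq_of_differentiableOn hb hp (hf.mono (strip_subset b))
    (hO.mono (principal_mono.2 (strip_subset b)))

/-! ### Functions of exponential type -/

/-- `f` has exponential type on `S`: `log ‖f z‖` grows at most linearly for `z ∈ S`. The shape
`C * (1 + ‖z‖)` of the exponent absorbs constant factors. -/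
def HasExpType (f : ℂ → ℂ) (S : Set ℂ) : Prop :=
  ∃ C, 0 ≤ C ∧ ∀ z ∈ S, ‖f z‖ ≤ Real.exp (C * (1 + ‖z‖))

namespace HasExpType

variable {f g : ℂ → ℂ} {S T : Set ℂ}

theorem mono (hf : HasExpType f S) (hT : T ⊆ S) : HasExpType f T :=
  let ⟨C, C_nonneg, norm_le⟩ := hf
  ⟨C, C_nonneg, fun z hz => norm_le z (hT hz)⟩

theorem mul (hf : HasExpType f S) (hg : HasExpType g S) : HasExpType (fun z => f z * g z) S := by
  obtain ⟨C, C_nonneg, f_le⟩ := hf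
  obtain ⟨D, D_nonneg, g_le⟩ := hg
  refine ⟨C + D, by positivity, fun z hz => ?_⟩
  rw [norm_mul, add_mul, Real.exp_add]
  gcongr
  exacts [f_le z hz, g_le z hz]

theorem of_isBigO (hg : HasExpType g S) (hfg : f =O[𝓟 S] g) : HasExpType f S := by
  obtain ⟨C, C_nonneg, g_le⟩ := hg
  obtain ⟨K, K_pos, hK⟩ := hfg.exists_pos
  refine ⟨K + C, by positivity, fun z hz => ?_⟩
  calc ‖f z‖ ≤ K * ‖g z‖ := isBigOWith_principal.1 hK z hz
    _ ≤ Real.exp K * Real.exp (C * (1 + ‖z‖)) := by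
        gcongr
        · linarith [Real.add_one_le_exp K]
        · exact g_le z hz
    _ ≤ Real.exp ((K + C) * (1 + ‖z‖)) := by
        rw [← Real.exp_add, add_mul]
        gcongr
        exact le_mul_of_one_le_right K_pos.le (by simp)

theorem one (S : Set ℂ) : HasExpType (fun _ => 1) S :=
  ⟨0, le_rfl, fun z _ => by simp⟩

theorem id (S : Set ℂ) : HasExpType (fun z => z) S :=
  ⟨1, zero_le_one, fun z _ => by linarith [Real.add_one_le_exp (1 * (1 + ‖z‖))]⟩

theorem add (hf : HasExpType f S) (hg : HasExpType g S) : HasExpType (fun z => f z + g z) S := by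
  obtain ⟨C, C_nonneg, f_le⟩ := hf
  obtain ⟨D, -, g_le⟩ := hg
  refine ⟨max C D + 1, by positivity, fun z hz => ?_⟩
  have f_le_max : ‖f z‖ ≤ Real.exp (max C D * (1 + ‖z‖)) :=
    (f_le z hz).trans (by gcongr; exact le_max_left C D)
  have g_le_max : ‖g z‖ ≤ Real.exp (max C D * (1 + ‖z‖)) :=
    (g_le z hz).trans (by gcongr; exact le_max_right C D)
  calc ‖f z + g z‖ ≤ 2 * Real.exp (max C D * (1 + ‖z‖)) := by
        linarith [norm_add_le (f z) (g z)]
    _ ≤ Real.exp (1 + ‖z‖) * Real.exp (max C D * (1 + ‖z‖)) := by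
        gcongr
        linarith [Real.add_one_le_exp (1 + ‖z‖), norm_nonneg z]
    _ = Real.exp ((max C D + 1) * (1 + ‖z‖)) := by
        rw [← Real.exp_add]
        ring_nf

theorem comp_add_const (hf : HasExpType f S) (w : ℂ) :
    HasExpType (fun z => f (z + w)) {z | z + w ∈ S} := by
  obtain ⟨C, C_nonneg, f_le⟩ := hf
  refine ⟨C * (1 + ‖w‖), by positivity, fun z hz => (f_le _ hz).trans ?_⟩
  rw [mul_assoc]
  gcongr
  nlinarith [norm_add_le z w, norm_nonneg z, norm_nonneg w,
    mul_nonneg (norm_nonneg z) (norm_nonneg w)]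

theorem union (hf : HasExpType f S) (hf' : HasExpType f T) : HasExpType f (S ∪ T) := by
  obtain ⟨C, C_nonneg, le_on_S⟩ := hf
  obtain ⟨D, -, le_on_T⟩ := hf'
  refine ⟨max C D, by positivity, fun z hz => ?_⟩
  rcases hz with hz | hz
  · exact (le_on_S z hz).trans (by gcongr; exact le_max_left C D)
  · exact (le_on_T z hz).trans (by gcongr; exact le_max_right C D)

theorem exists_isBigO_exp (hf : HasExpType f S) :
    ∃ B : ℝ, f =O[𝓟 S] fun z => Real.exp (B * ‖z‖) := by
  obtain ⟨C, -, f_le⟩ := hf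
  refine ⟨C, isBigO_principal.2 ⟨Real.exp C, fun z hz => ?_⟩⟩
  rw [Real.norm_of_nonneg (Real.exp_pos _).le, ← Real.exp_add]
  simpa only [mul_add, mul_one] using f_le z hz

end HasExpType

theorem borelCaratheodory_ball {g : ℂ → ℂ} {c z : ℂ} {R A : ℝ} (hA : 0 < A)
    (hg : DifferentiableOn ℂ g (Metric.ball c R)) (hre : ∀ w ∈ Metric.ball c R, (g w).re ≤ A)
    (hz : ‖z - c‖ < R) :
    ‖g z‖ ≤ 2 * A * ‖z - c‖ / (R - ‖z - c‖) + ‖g c‖ * (R + ‖z - c‖) / (R - ‖z - c‖) := by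
  have translate_mem : ∀ w ∈ Metric.ball (0 : ℂ) R, c + w ∈ Metric.ball c R := fun w hw => by
    simpa using hw
  have bound := borelCaratheodory (f := fun w => g (c + w)) (z := z - c) hA
    (hg.comp (by fun_prop) translate_mem) (fun w hw => hre _ (translate_mem w hw))
    ((norm_nonneg _).trans_lt hz) (mem_ball_zero_iff.2 hz)
  simpa only [add_sub_cancel, add_zero] using bound

theorem exists_eq_mul_exp_of_ne_zero {f : ℂ → ℂ} {c : ℂ} {R : ℝ} (hR : 0 < R)
    (hf : DifferentiableOn ℂ f (Metric.ball c R)) (hf0 : ∀ z ∈ Metric.ball c R, f z ≠ 0) :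
    ∃ g : ℂ → ℂ, DifferentiableOn ℂ g (Metric.ball c R) ∧ g c = 0 ∧
      ∀ z ∈ Metric.ball c R, f z = f c * cexp (g z) := by
  have differentiableOn_logDeriv : DifferentiableOn ℂ (fun z => deriv f z / f z)
      (Metric.ball c R) := (hf.deriv Metric.isOpen_ball).div hf hf0
  obtain ⟨g, g_center, hasDerivAt_g⟩ := differentiableOn_logDeriv.isExactOn_ball.with_val_at c 0
  have hasDerivAt_quotient : ∀ z ∈ Metric.ball c R,
      HasDerivAt (fun z => f z * cexp (-g z)) 0 z := by
    intro z hz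
    have hasDerivAt_f := (hf.differentiableAt (Metric.isOpen_ball.mem_nhds hz)).hasDerivAt
    refine (hasDerivAt_f.fun_mul (hasDerivAt_g z hz).fun_neg.cexp).congr_deriv ?_
    have := hf0 z hz
    field_simp
    ring
  refine ⟨g, fun z hz => (hasDerivAt_g z hz).differentiableAt.differentiableWithinAt, g_center,
    fun z hz => ?_⟩
  have quotient_const : f c * cexp (-g c) = f z * cexp (-g z) :=
    (convex_ball c R).is_const_of_fderivWithin_eq_zero (𝕜 := ℂ)
      (fun w hw => (hasDerivAt_quotient w hw).differentiableAt.differentiableWithinAt)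
      (fun w hw => by
        rw [fderivWithin_of_isOpen Metric.isOpen_ball hw]
        ext
        simpa using (hasDerivAt_quotient w hw).deriv)
      (Metric.mem_ball_self hR) hz
  rw [g_center, neg_zero, Complex.exp_zero, mul_one] at quotient_const
  rw [quotient_const, mul_assoc, ← Complex.exp_add, neg_add_cancel, Complex.exp_zero, mul_one]

theorem norm_inv_le_exp_of_norm_le_exp {f : ℂ → ℂ} {c z : ℂ} {r R A B : ℝ} (hrR : r < R)
    (hAB : 0 < A + B) (hf : DifferentiableOn ℂ f (Metric.ball c R))
    (hf0 : ∀ w ∈ Metric.ball c R, f w ≠ 0) (hfA : ∀ w ∈ Metric.ball c R, ‖f w‖ ≤ Real.exp A)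
    (hfB : ‖(f c)⁻¹‖ ≤ Real.exp B) (hz : ‖z - c‖ ≤ r) :
    ‖(f z)⁻¹‖ ≤ Real.exp (B + 2 * (A + B) * r / (R - r)) := by
  have r_nonneg : 0 ≤ r := (norm_nonneg _).trans hz
  have R_pos : 0 < R := r_nonneg.trans_lt hrR
  have z_mem : z ∈ Metric.ball c R := mem_ball_iff_norm.2 (hz.trans_lt hrR)
  obtain ⟨g, hg, g_center, f_eq⟩ := exists_eq_mul_exp_of_ne_zero R_pos hf hf0
  have re_g_le : ∀ w ∈ Metric.ball c R, (g w).re ≤ A + B := by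
    intro w hw
    have exp_g_eq : cexp (g w) = f w * (f c)⁻¹ := by
      rw [f_eq w hw, mul_right_comm, mul_inv_cancel₀ (hf0 c (Metric.mem_ball_self R_pos)), one_mul]
    rw [← Real.exp_le_exp, ← norm_exp, exp_g_eq, norm_mul, Real.exp_add]
    gcongr
    exact hfA w hw
  have norm_g_le : ‖g z‖ ≤ 2 * (A + B) * r / (R - r) := by
    have bound := borelCaratheodory_ball hAB hg re_g_le (hz.trans_lt hrR)
    rw [g_center, norm_zero, zero_mul, zero_div, add_zero] at bound
    exact bound.trans (by gcongr)
  rw [f_eq z z_mem, mul_inv, ← Complex.exp_neg, norm_mul, norm_exp, Real.exp_add]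
  gcongr
  rw [neg_re]
  linarith [neg_le_of_abs_le (abs_re_le_norm (g z))]

/-! ### The Riemann `ξ`-function -/

/-- The Riemann `ξ`-function `s (s - 1) π^(-s/2) Γ(s/2) ζ(s)`, without the customary factor `1/2`
so that `entireXi 1 = 1`. Writing it through `completedRiemannZeta₀` makes it visibly entire. -/
noncomputable def entireXi (s : ℂ) : ℂ := s * (s - 1) * completedRiemannZeta₀ s + 1

theorem differentiable_entireXi : Differentiable ℂ entireXi := by
  unfold entireXi
  have := differentiable_completedZeta₀
  fun_prop

theorem entireXi_one_sub (s : ℂ) : entireXi (1 - s) = entireXi s := by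
  simp only [entireXi, completedRiemannZeta₀_one_sub]
  ring

theorem entireXi_one : entireXi 1 = 1 := by
  simp only [entireXi, sub_self, mul_zero, zero_mul, zero_add]

theorem riemannZeta₁_eq_sub_one_mul {s : ℂ} (hs : s ≠ 1) :
    riemannZeta₁ s = (s - 1) * riemannZeta s := by
  rw [riemannZeta_eq_inv_sub_mul hs, mul_inv_cancel_left₀ (sub_ne_zero.2 hs)]

theorem entireXi_eq_mul {s : ℂ} (hs : 0 < s.re) :
    entireXi s = s * Gammaℝ s * riemannZeta₁ s := by
  have s_ne_zero : s ≠ 0 := ne_zero_of_re_pos hs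
  rcases eq_or_ne s 1 with rfl | s_ne_one
  · simp only [entireXi_one, Gammaℝ_one, riemannZeta₁_one, mul_one]
  · have one_sub_ne_zero : 1 - s ≠ 0 := sub_ne_zero.2 s_ne_one.symm
    have Gammaℝ_ne_zero := Gammaℝ_ne_zero_of_re_pos hs
    rw [riemannZeta₁_eq_sub_one_mul s_ne_one, riemannZeta_def_of_ne_zero s_ne_zero,
      completedRiemannZeta_eq, entireXi]
    field_simp
    ring

theorem riemannZeta₁_ne_zero_of_RH (hRH : RiemannHypothesis) {s : ℂ} (hs : 1 / 2 < s.re) :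
    riemannZeta₁ s ≠ 0 := by
  rcases eq_or_ne s 1 with rfl | s_ne_one
  · simp only [riemannZeta₁_one, ne_eq, one_ne_zero, not_false_eq_true]
  · rw [riemannZeta₁_eq_sub_one_mul s_ne_one]
    refine mul_ne_zero (sub_ne_zero.2 s_ne_one) fun zeta_eq_zero => ?_
    have not_trivial_zero : ¬∃ n : ℕ, s = -2 * (n + 1) := by
      rintro ⟨n, rfl⟩
      have re_eq : (-2 * (n + 1) : ℂ).re = -2 * (n + 1) := by simp
      linarith [n.cast_nonneg (α := ℝ)]
    exact hs.ne' (hRH s zeta_eq_zero not_trivial_zero s_ne_one)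

theorem entireXi_ne_zero_of_RH (hRH : RiemannHypothesis) {s : ℂ} (hs : 1 / 2 < s.re) :
    entireXi s ≠ 0 := by
  have re_pos : 0 < s.re := by linarith
  rw [entireXi_eq_mul re_pos]
  exact mul_ne_zero (mul_ne_zero (ne_zero_of_re_pos re_pos) (Gammaℝ_ne_zero_of_re_pos re_pos))
    (riemannZeta₁_ne_zero_of_RH hRH hs)

theorem Gammaℝ_conj (s : ℂ) : Gammaℝ (conj s) = conj (Gammaℝ s) := by
  have arg_pi_ne : arg (Real.pi : ℂ) ≠ Real.pi := by
    rw [arg_ofReal_of_nonneg Real.pi_pos.le]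
    exact Real.pi_ne_zero.symm
  have conj_cpow := cpow_conj (Real.pi : ℂ) (-s / 2) arg_pi_ne
  rw [conj_ofReal] at conj_cpow
  rw [Gammaℝ_def, Gammaℝ_def, map_mul, ← Gamma_conj, ← conj_cpow]
  simp only [map_div₀, map_neg, conj_ofNat]

theorem entireXi_conj {s : ℂ} (hs : 0 < s.re) : entireXi (conj s) = conj (entireXi s) := by
  have riemannZeta₁_conj : riemannZeta₁ (conj s) = conj (riemannZeta₁ s) := by
    rcases eq_or_ne s 1 with rfl | s_ne_one
    · simp only [map_one, riemannZeta₁_one]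
    · rw [riemannZeta₁_eq_sub_one_mul s_ne_one, riemannZeta₁_eq_sub_one_mul, riemannZeta_conj,
        map_mul, map_sub, map_one]
      simpa using (RingHom.injective (starRingEnd ℂ)).ne s_ne_one
  rw [entireXi_eq_mul hs, entireXi_eq_mul (by simpa using hs), map_mul, map_mul, Gammaℝ_conj,
    riemannZeta₁_conj]

theorem norm_entireXi_reflect {a : ℝ} (ha : 0 < a) (y : ℝ) :
    ‖entireXi (y * I + (1 / 2 - a))‖ = ‖entireXi (y * I + (1 / 2 + a))‖ := by
  rw [← norm_conj (entireXi (y * I + (1 / 2 + a))), ← entireXi_conj (by simpa using by positivity),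
    ← entireXi_one_sub]
  congr 2
  simp only [map_add, map_mul, conj_ofReal, conj_I, map_div₀, map_one, conj_ofNat]
  ring

theorem mellin_isBigO_one {f : ℝ → ℂ} {α β : ℝ} (hα : MellinConvergent f α)
    (hβ : MellinConvergent f β) :
    mellin f =O[𝓟 {s | α ≤ s.re ∧ s.re ≤ β}] fun _ => (1 : ℂ) := by
  refine isBigO_principal.2 ⟨∫ x in Set.Ioi (0 : ℝ),
    (‖(x : ℂ) ^ (α - 1 : ℂ) • f x‖ + ‖(x : ℂ) ^ (β - 1 : ℂ) • f x‖), fun s hs => ?_⟩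
  rw [norm_one, mul_one]
  refine norm_integral_le_of_norm_le (hα.norm.add hβ.norm) ?_
  filter_upwards [ae_restrict_mem measurableSet_Ioi] with x (hx : 0 < x)
  simp only [norm_smul, norm_cpow_eq_rpow_re_of_pos hx, sub_re, ofReal_re, one_re]
  rw [← add_mul]
  gcongr
  rcases le_total 1 x with one_le | le_one
  · exact (Real.rpow_le_rpow_of_exponent_le one_le (by linarith [hs.2])).trans
      (le_add_of_nonneg_left (by positivity))
  · exact (Real.rpow_le_rpow_of_exponent_ge hx le_one (by linarith [hs.1])).trans
      (le_add_of_nonneg_right (by positivity))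

theorem completedRiemannZeta₀_isBigO_one (α β : ℝ) :
    completedRiemannZeta₀ =O[𝓟 {s | α ≤ s.re ∧ s.re ≤ β}] fun _ => (1 : ℂ) := by
  have mellinConvergent (s : ℂ) :
      MellinConvergent (HurwitzZeta.hurwitzEvenFEPair 0).f_modif s :=
    ((HurwitzZeta.hurwitzEvenFEPair 0).isStrongFEPair_toStrongFEPair.hasMellin s).1
  have half_mem : Tendsto (fun s : ℂ => s / 2) (𝓟 {s | α ≤ s.re ∧ s.re ≤ β})
      (𝓟 {s | α / 2 ≤ s.re ∧ s.re ≤ β / 2}) := by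
    refine tendsto_principal_principal.2 fun s hs => ?_
    rw [Set.mem_ofPred_eq, div_ofNat_re]
    exact ⟨by linarith [hs.1], by linarith [hs.2]⟩
  exact (((mellin_isBigO_one (mellinConvergent _) (mellinConvergent _)).comp_tendsto
    half_mem).const_mul_left (2⁻¹ : ℂ)).congr_left fun s => inv_mul_eq_div _ _

theorem entireXi_hasExpType (α β : ℝ) : HasExpType entireXi {s | α ≤ s.re ∧ s.re ≤ β} := by
  have zeta_hasExpType := (HasExpType.one _).of_isBigO (completedRiemannZeta₀_isBigO_one α β)
  have sub_one_hasExpType : HasExpType (fun s => s - 1) {s | α ≤ s.re ∧ s.re ≤ β} :=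
    ((HasExpType.id Set.univ).comp_add_const (-1)).mono fun _ _ => Set.mem_univ _
  exact (((HasExpType.id _).mul sub_one_hasExpType).mul zeta_hasExpType).add (HasExpType.one _)

theorem betaIntegral_isBigO_one {r a : ℝ} (hr : 0 < r) (ha : 0 < a) :
    (fun u => betaIntegral u a) =O[𝓟 {u | r ≤ u.re}] fun _ => (1 : ℂ) := by
  have integrable := (betaIntegral_convergent (u := r) (v := a) (by simpa) (by simpa)).norm
  refine isBigO_principal.2
    ⟨∫ x : ℝ in 0..1, ‖(x : ℂ) ^ (r - 1 : ℂ) * (1 - x : ℂ) ^ (a - 1 : ℂ)‖, fun u hu => ?_⟩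
  rw [norm_one, mul_one]
  refine intervalIntegral.norm_integral_le_of_norm_le zero_le_one
    (.of_forall fun x hx => ?_) integrable
  rw [norm_mul, norm_mul, norm_cpow_eq_rpow_re_of_pos hx.1, norm_cpow_eq_rpow_re_of_pos hx.1]
  gcongr ?_ * _
  exact Real.rpow_le_rpow_of_exponent_ge hx.1 hx.2 (by simpa using hu)

theorem Gammaℝ_sub_isBigO_Gammaℝ {r a : ℝ} (hr : 0 < r) (ha : 0 < a) :
    (fun s => Gammaℝ (s - 2 * a)) =O[𝓟 {s | r + 2 * a ≤ s.re}] Gammaℝ := by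
  have beta_bounded : (fun s : ℂ => betaIntegral (s / 2 - a) a)
      =O[𝓟 {s | r + 2 * a ≤ s.re}] fun _ => (1 : ℂ) := by
    refine (betaIntegral_isBigO_one (half_pos hr) ha).comp_tendsto
      (tendsto_principal_principal.2 fun s (hs : r + 2 * a ≤ s.re) => ?_)
    simp only [Set.mem_ofPred_eq, sub_re, div_ofNat_re, ofReal_re]
    linarith
  have Gammaℝ_sub_eq : ∀ s ∈ {s : ℂ | r + 2 * a ≤ s.re},
      (Real.pi : ℂ) ^ (a : ℂ) / Gamma a * betaIntegral (s / 2 - a) a * Gammaℝ s =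
        Gammaℝ (s - 2 * a) := by
    intro s (hs : r + 2 * a ≤ s.re)
    have Gamma_mul := Gamma_mul_Gamma_eq_betaIntegral (s := s / 2 - a) (t := a)
      (by simp only [sub_re, div_ofNat_re, ofReal_re]; linarith) (by simpa)
    rw [sub_add_cancel] at Gamma_mul
    have Gamma_ne_zero : Gamma a ≠ 0 := Gamma_ne_zero_of_re_pos (by simpa)
    have pi_ne_zero : (Real.pi : ℂ) ≠ 0 := ofReal_ne_zero.2 Real.pi_ne_zero
    rw [Gammaℝ_def, Gammaℝ_def, show -(s - 2 * a) / 2 = a + -s / 2 by ring,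
      show (s - 2 * a) / 2 = s / 2 - a by ring, cpow_add _ _ pi_ne_zero,
      eq_div_of_mul_eq Gamma_ne_zero Gamma_mul]
    ring
  refine IsBigO.congr' ((beta_bounded.const_mul_left _).mul (isBigO_refl Gammaℝ _))
    (eventually_principal.2 Gammaℝ_sub_eq) ?_
  exact .of_forall fun s => one_mul _

theorem norm_cos_le_exp_norm (z : ℂ) : ‖cos z‖ ≤ Real.exp ‖z‖ := by
  have exp_le := norm_exp_le_exp_norm (z * I)
  have exp_neg_le := norm_exp_le_exp_norm (-z * I)
  rw [norm_mul, norm_I, mul_one] at exp_le exp_neg_le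
  rw [norm_neg] at exp_neg_le
  rw [cos, norm_div, Complex.norm_ofNat]
  linarith [norm_add_le (cexp (z * I)) (cexp (-z * I))]

theorem inv_Gammaℝ_hasExpType_re_eq_one : HasExpType (fun s => (Gammaℝ s)⁻¹) {s | s.re = 1} := by
  refine ⟨2, zero_le_two, fun s (hs : s.re = 1) => ?_⟩
  have conj_eq : conj s = 1 - (s - 1) := by
    apply Complex.ext <;> simp [hs]
  have norm_sq_eq : ‖(Gammaℝ s)⁻¹‖ ^ 2 = ‖cos (Real.pi * (s - 1) / 2)‖ := by
    rw [← inv_inv (cos _), ← Gammaℝ_one_sub_mul_Gammaℝ_one_add, ← conj_eq, Gammaℝ_conj,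
      add_sub_cancel, norm_inv, norm_inv, norm_mul, norm_conj, inv_pow, sq]
  have norm_arg_le : ‖(Real.pi * (s - 1) / 2 : ℂ)‖ ≤ 2 * (1 + ‖s‖) := by
    rw [norm_div, norm_mul, norm_real, Real.norm_of_nonneg Real.pi_pos.le, Complex.norm_ofNat]
    have norm_sub_le : ‖s - 1‖ ≤ 1 + ‖s‖ := by linarith [norm_sub_le s 1, norm_one (α := ℂ)]
    nlinarith [Real.pi_le_four, norm_nonneg (s - 1)]
  have exp_one_le : 1 ≤ Real.exp (2 * (1 + ‖s‖)) := Real.one_le_exp (by positivity)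
  refine le_of_sq_le_sq ?_ (Real.exp_pos _).le
  calc ‖(Gammaℝ s)⁻¹‖ ^ 2 ≤ Real.exp (2 * (1 + ‖s‖)) := by
        rw [norm_sq_eq]
        exact (norm_cos_le_exp_norm _).trans (Real.exp_le_exp.2 norm_arg_le)
    _ ≤ Real.exp (2 * (1 + ‖s‖)) ^ 2 := le_self_pow₀ exp_one_le two_ne_zero

theorem inv_Gammaℝ_hasExpType_re_eq {b : ℝ} (hb : 1 < b) :
    HasExpType (fun s => (Gammaℝ s)⁻¹) {s | s.re = b} := by
  set a := (b - 1) / 2 with a_def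
  have shifted := (inv_Gammaℝ_hasExpType_re_eq_one.comp_add_const (-(2 * a : ℂ))).mono
    (T := {s | s.re = b}) fun s (hs : s.re = b) => by
      simp [hs, a_def]
      ring
  have isBigO := (Gammaℝ_sub_isBigO_Gammaℝ one_pos (a := a) (by simp [a_def, hb])).mono
    (l := 𝓟 {s | s.re = b}) (principal_mono.2 fun s hs => by
      rw [Set.mem_ofPred_eq, hs, a_def]
      linarith)
  refine shifted.of_isBigO (isBigO.inv_rev (eventually_principal.2 fun s (hs : s.re = b) => ?_))
  refine fun Gammaℝ_eq_zero => absurd Gammaℝ_eq_zero (Gammaℝ_ne_zero_of_re_pos ?_)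
  simp [hs, a_def]
  linarith

theorem LSeries_isBigO_one {f : ℕ → ℂ} {σ : ℝ} (hf : LSeriesSummable f σ) :
    LSeries f =O[𝓟 {s | σ ≤ s.re}] fun _ => (1 : ℂ) := by
  refine isBigO_principal.2 ⟨∑' n, ‖LSeries.term f σ n‖, fun s hs => ?_⟩
  rw [norm_one, mul_one]
  exact tsum_of_norm_bounded hf.norm.hasSum fun n =>
    LSeries.norm_term_le_of_re_le_re f (by simpa using hs) n

theorem riemannZeta_isBigO_one {σ : ℝ} (hσ : 1 < σ) :
    riemannZeta =O[𝓟 {s | σ ≤ s.re}] fun _ => (1 : ℂ) :=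
  (LSeries_isBigO_one (LSeriesSummable_one_iff.2 (by simpa))).congr'
    (eventually_principal.2 fun _ hs => LSeries_one_eq_riemannZeta (hσ.trans_le hs)) .rfl

theorem inv_riemannZeta_isBigO_one {σ : ℝ} (hσ : 1 < σ) :
    (fun s => (riemannZeta s)⁻¹) =O[𝓟 {s | σ ≤ s.re}] fun _ => (1 : ℂ) := by
  refine (LSeries_isBigO_one (ArithmeticFunction.LSeriesSummable_moebius_iff.2 (by simpa))).congr'
    (eventually_principal.2 fun s (hs : σ ≤ s.re) => ?_) .rfl
  have zeta_mul_moebius := ArithmeticFunction.LSeries_zeta_mul_Lseries_moebius (hσ.trans_le hs)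
  rw [ArithmeticFunction.LSeries_zeta_eq_riemannZeta (hσ.trans_le hs)] at zeta_mul_moebius
  exact eq_inv_of_mul_eq_one_right zeta_mul_moebius

theorem entireXi_eq_Gammaℝ_mul_riemannZeta {s : ℂ} (hs : 1 < s.re) :
    entireXi s = s * (s - 1) * Gammaℝ s * riemannZeta s := by
  have s_ne_one : s ≠ 1 := by
    rintro rfl
    exact hs.ne' one_re
  rw [entireXi_eq_mul (one_pos.trans hs), riemannZeta₁_eq_sub_one_mul s_ne_one]
  ring

theorem inv_entireXi_hasExpType_re_eq {b : ℝ} (hb : 1 < b) :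
    HasExpType (fun s => (entireXi s)⁻¹) {s | s.re = b} := by
  have inv_sub_bounded (p : ℂ) (hp : p.re < b) :
      (fun s => (s - p)⁻¹) =O[𝓟 {s | s.re = b}] fun _ => (1 : ℂ) := by
    refine isBigO_principal.2 ⟨(b - p.re)⁻¹, fun s (hs : s.re = b) => ?_⟩
    rw [norm_one, mul_one, norm_inv]
    refine inv_anti₀ (sub_pos.2 hp) ?_
    simpa [hs] using re_le_norm (s - p)
  have zeta_bounded := (inv_riemannZeta_isBigO_one hb).mono
    (l := 𝓟 {s | s.re = b}) (principal_mono.2 fun s hs => hs.ge)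
  refine ((((HasExpType.one _).of_isBigO (inv_sub_bounded 0 (one_pos.trans hb))).mul
    ((HasExpType.one _).of_isBigO (inv_sub_bounded 1 hb))).mul
    ((inv_Gammaℝ_hasExpType_re_eq hb).mul ((HasExpType.one _).of_isBigO zeta_bounded))).of_isBigO
    (EventuallyEq.isBigO (eventually_principal.2 fun s hs => ?_))
  change (entireXi s)⁻¹ = (s - 0)⁻¹ * (s - 1)⁻¹ * ((Gammaℝ s)⁻¹ * (riemannZeta s)⁻¹)
  rw [entireXi_eq_Gammaℝ_mul_riemannZeta (hb.trans_eq (Eq.symm hs)), sub_zero]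
  simp only [mul_inv, mul_assoc]

theorem mul_one_add_norm_le_of_mem_ball {c s w : ℂ} {R E K : ℝ} (hs : ‖s - c‖ ≤ R)
    (hw : w ∈ Metric.ball c R) (hE : 0 ≤ E) (hEK : E * (1 + 2 * R) ≤ K) :
    E * (1 + ‖w‖) ≤ K * (1 + ‖s‖) := by
  have norm_w_le : ‖w‖ ≤ ‖s‖ + 2 * R := by
    linarith [norm_sub_norm_le w c, norm_sub_norm_le c s, norm_sub_rev s c,
      mem_ball_iff_norm.1 hw]
  have R_nonneg : 0 ≤ R := (norm_nonneg _).trans hs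
  calc E * (1 + ‖w‖) ≤ E * ((1 + 2 * R) * (1 + ‖s‖)) := by
        gcongr
        nlinarith [norm_nonneg s]
    _ ≤ K * (1 + ‖s‖) := by
        rw [← mul_assoc]
        gcongr

theorem HasExpType.inv_of_re_eq {f : ℂ → ℂ} {α a b : ℝ} (ha : 0 < a) (hab : α + a ≤ b)
    (hf : HasExpType f {z | α ≤ z.re ∧ z.re ≤ 2 * b - α})
    (hf_diff : DifferentiableOn ℂ f {z | α < z.re}) (hf0 : ∀ z, α < z.re → f z ≠ 0)
    (hinv : HasExpType (fun z => (f z)⁻¹) {z | z.re = b}) :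
    HasExpType (fun z => (f z)⁻¹) {z | α + a ≤ z.re ∧ z.re ≤ b} := by
  obtain ⟨C, C_nonneg, f_le⟩ := hf
  obtain ⟨D, D_nonneg, inv_le⟩ := hinv
  set R := b - α
  set K := (C + D + 1) * (1 + 2 * R) with K_def
  have R_sub_nonneg : 0 ≤ R - a := by linarith
  have R_pos : 0 < R := by linarith
  refine ⟨K + 2 * (K + K) * (R - a) / a, by positivity, fun s ⟨re_ge, re_le⟩ => ?_⟩
  set c : ℂ := b + s.im * I with c_def
  have c_re : c.re = b := by simp [c_def]
  have norm_s_sub_c : ‖s - c‖ ≤ R - a := by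
    have sub_eq : s - c = (s.re - b : ℝ) := by apply Complex.ext <;> simp [c_def]
    rw [sub_eq, norm_real, Real.norm_of_nonpos (by linarith)]
    linarith
  have re_mem : ∀ w ∈ Metric.ball c R, α < w.re ∧ w.re < 2 * b - α := fun w hw => by
    have abs_lt_R := abs_lt.1 ((abs_re_le_norm (w - c)).trans_lt (mem_ball_iff_norm.1 hw))
    rw [sub_re, c_re] at abs_lt_R
    constructor <;> linarith
  have exponent_le {w : ℂ} (hw : w ∈ Metric.ball c R) {E : ℝ} (hE : 0 ≤ E)
      (hEK : E * (1 + 2 * R) ≤ K) : E * (1 + ‖w‖) ≤ K * (1 + ‖s‖) :=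
    mul_one_add_norm_le_of_mem_ball (norm_s_sub_c.trans (sub_le_self R ha.le)) hw hE hEK
  have c_mem := Metric.mem_ball_self (x := c) R_pos
  have norm_inv_le := norm_inv_le_exp_of_norm_le_exp (A := K * (1 + ‖s‖)) (B := K * (1 + ‖s‖))
    (sub_lt_self R ha) (by positivity) (hf_diff.mono fun w hw => (re_mem w hw).1)
    (fun w hw => hf0 w (re_mem w hw).1)
    (fun w hw => (f_le w ⟨(re_mem w hw).1.le, (re_mem w hw).2.le⟩).trans
      (Real.exp_le_exp.2 (exponent_le hw C_nonneg (by rw [K_def]; gcongr; linarith))))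
    ((inv_le c c_re).trans
      (Real.exp_le_exp.2 (exponent_le c_mem D_nonneg (by rw [K_def]; gcongr; linarith))))
    norm_s_sub_c
  refine norm_inv_le.trans_eq ?_
  rw [sub_sub_cancel]
  ring_nf

theorem inv_entireXi_hasExpType_of_RH (hRH : RiemannHypothesis) {a b : ℝ} (ha : 0 < a)
    (hb : 1 < b) (hab : 1 / 2 + a ≤ b) :
    HasExpType (fun s => (entireXi s)⁻¹) {s | 1 / 2 + a ≤ s.re ∧ s.re ≤ b} :=
  HasExpType.inv_of_re_eq ha hab (entireXi_hasExpType _ _)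
    differentiable_entireXi.differentiableOn (fun _ hz => entireXi_ne_zero_of_RH hRH hz)
    (inv_entireXi_hasExpType_re_eq hb)

theorem const_isBigO_sub {σ : ℝ} {p : ℂ} (hp : p.re < σ) (c : ℂ) :
    (fun _ => c) =O[𝓟 {s | σ ≤ s.re}] fun s => s - p := by
  have sub_pos : 0 < σ - p.re := sub_pos.2 hp
  refine isBigO_principal.2 ⟨‖c‖ / (σ - p.re), fun s (hs : σ ≤ s.re) => ?_⟩
  have sub_le_norm : σ - p.re ≤ ‖s - p‖ :=
    (sub_le_sub_right hs _).trans ((sub_re s p).symm.trans_le (re_le_norm _))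
  rw [div_mul_eq_mul_div, le_div_iff₀ sub_pos]
  gcongr

theorem entireXi_sub_isBigO_entireXi {σ a : ℝ} (hσ : 1 < σ) (ha : 0 < a) :
    (fun s => entireXi (s - 2 * a)) =O[𝓟 {s | σ + 2 * a ≤ s.re}] entireXi := by
  have re_gt : ∀ s ∈ {s : ℂ | σ + 2 * a ≤ s.re}, 1 < s.re ∧ σ ≤ (s - 2 * a).re :=
    fun s (hs : σ + 2 * a ≤ s.re) => by
      simp only [sub_re, mul_re, re_ofNat, ofReal_re, im_ofNat, ofReal_im, mul_zero, sub_zero]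
      constructor <;> linarith
  have sub_isBigO (p : ℂ) (hp : p.re < σ + 2 * a) :
      (fun s => s - 2 * a - p) =O[𝓟 {s : ℂ | σ + 2 * a ≤ s.re}] fun s => s - p :=
    ((isBigO_refl _ _).sub (const_isBigO_sub hp (2 * a))).congr_left fun s => sub_right_comm _ _ _
  have zeta_isBigO : (fun s => riemannZeta (s - 2 * a)) =O[𝓟 {s | σ + 2 * a ≤ s.re}]
      riemannZeta := by
    have one_isBigO := ((inv_riemannZeta_isBigO_one hσ).mono (l := 𝓟 {s | σ + 2 * a ≤ s.re})
      (principal_mono.2 fun s hs =>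
        ((le_add_iff_nonneg_right σ).2 (by positivity)).trans hs)).inv_rev
      (eventually_principal.2 fun s hs zeta_inv_eq_zero => absurd (inv_eq_zero.1 zeta_inv_eq_zero)
        (riemannZeta_ne_zero_of_one_le_re (re_gt s hs).1.le))
    simp only [inv_inv, inv_one] at one_isBigO
    exact ((riemannZeta_isBigO_one hσ).comp_tendsto (tendsto_principal_principal.2
      fun s hs => (re_gt s hs).2)).trans one_isBigO
  refine ((((sub_isBigO 0 (by simp; linarith)).mul (sub_isBigO 1 (by simp; linarith))).mul
    (Gammaℝ_sub_isBigO_Gammaℝ (one_pos.trans hσ) ha)).mul zeta_isBigO).congr'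
    (eventually_principal.2 fun s hs => ?_) (eventually_principal.2 fun s hs => ?_)
  · simp only [entireXi_eq_Gammaℝ_mul_riemannZeta (hσ.trans_le (re_gt s hs).2), sub_zero]
  · simp only [entireXi_eq_Gammaℝ_mul_riemannZeta (re_gt s hs).1, sub_zero]

/-! ### Positivity of `Re ξ'/ξ` -/

theorem HasExpType.norm_le_of_norm_le_imaginary_axis {f : ℂ → ℂ} {σ M : ℝ}
    (hexp : HasExpType f {z | 0 ≤ z.re ∧ z.re ≤ σ})
    (hf : DifferentiableOn ℂ f {z | 0 ≤ z.re}) (hO : f =O[𝓟 {z | σ ≤ z.re}] fun _ => (1 : ℂ))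
    (hM : ∀ y : ℝ, ‖f (y * I)‖ ≤ M) {z : ℂ} (hz : 0 ≤ z.re) : ‖f z‖ ≤ M := by
  have diffContOnCl : DiffContOnCl ℂ f {z | 0 < z.re} :=
    DifferentiableOn.diffContOnCl (by rwa [closure_setOfPred_lt_re])
  refine PhragmenLindelof.right_half_plane_of_bounded_on_real diffContOnCl ⟨1, by norm_num, ?_⟩
    ?_ hM hz
  · obtain ⟨B, isBigO_exp⟩ := (hexp.union ((HasExpType.one _).of_isBigO hO)).exists_isBigO_exp
    refine ⟨B, ?_⟩
    simp only [Real.rpow_one]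
    refine isBigO_exp.mono (inf_le_right.trans (principal_mono.2 fun z (hz : 0 < z.re) => ?_))
    exact (le_total z.re σ).imp (fun re_le => ⟨hz.le, re_le⟩) fun re_ge => re_ge
  · obtain ⟨C, norm_le⟩ := isBigO_principal.1 hO
    refine isBoundedUnder_of_eventually_le (a := C) ?_
    filter_upwards [eventually_ge_atTop σ] with x hx
    simpa using norm_le x (by simpa using hx)

theorem norm_entireXi_le_norm_entireXi (hRH : RiemannHypothesis) {a : ℝ} (ha : 0 < a) {z : ℂ}
    (hz : 0 ≤ z.re) : ‖entireXi (z + (1 / 2 - a))‖ ≤ ‖entireXi (z + (1 / 2 + a))‖ := by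
  have re_add_half_sub (z : ℂ) : (z + (1 / 2 - a)).re = z.re + (1 / 2 - a) := by simp
  have re_add_half_add (z : ℂ) : (z + (1 / 2 + a)).re = z.re + (1 / 2 + a) := by simp
  set F := fun z : ℂ => entireXi (z + (1 / 2 - a)) * (entireXi (z + (1 / 2 + a)))⁻¹ with F_def
  have denom_ne_zero : ∀ z : ℂ, 0 ≤ z.re → entireXi (z + (1 / 2 + a)) ≠ 0 := fun z hz =>
    entireXi_ne_zero_of_RH hRH (by rw [re_add_half_add]; linarith)
  have differentiableOn : DifferentiableOn ℂ F {z | 0 ≤ z.re} := by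
    have := differentiable_entireXi
    exact DifferentiableOn.fun_mul (by fun_prop)
      (DifferentiableOn.fun_inv (by fun_prop) denom_ne_zero)
  have hasExpType_left : HasExpType F {z | 0 ≤ z.re ∧ z.re ≤ 3 / 2 + a} := by
    refine (((entireXi_hasExpType (1 / 2 - a) 2).comp_add_const (1 / 2 - a)).mono ?_).mul
      (((inv_entireXi_hasExpType_of_RH hRH ha (b := 2 + 2 * a) (by linarith)
        (by linarith)).comp_add_const (1 / 2 + a)).mono ?_) <;>
    · rintro z ⟨re_nonneg, re_le⟩
      simp only [Set.mem_ofPred_eq, re_add_half_sub, re_add_half_add]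
      constructor <;> linarith
  have bounded_right : F =O[𝓟 {z | 3 / 2 + a ≤ z.re}] fun _ => (1 : ℂ) := by
    have shift_mem : Tendsto (fun z : ℂ => z + (1 / 2 + a)) (𝓟 {z | 3 / 2 + a ≤ z.re})
        (𝓟 {s | 2 + 2 * a ≤ s.re}) :=
      tendsto_principal_principal.2 fun z (hz : 3 / 2 + a ≤ z.re) => by
        rw [Set.mem_ofPred_eq, re_add_half_add]
        linarith
    refine (((entireXi_sub_isBigO_entireXi one_lt_two ha).comp_tendsto shift_mem).mul
      (isBigO_refl (fun z : ℂ => (entireXi (z + (1 / 2 + a)))⁻¹) _)).congr' ?_ ?_ <;>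
    refine eventually_principal.2 fun z (hz : 3 / 2 + a ≤ z.re) => ?_
    · simp only [F_def, Function.comp_apply]
      ring_nf
    · exact mul_inv_cancel₀ (denom_ne_zero z (by linarith))
  have bounded_on_imaginary_axis (y : ℝ) : ‖F (y * I)‖ ≤ 1 := by
    rw [F_def, norm_mul, norm_inv, norm_entireXi_reflect ha]
    exact mul_inv_le_one
  have norm_le_one := hasExpType_left.norm_le_of_norm_le_imaginary_axis differentiableOn
    bounded_right bounded_on_imaginary_axis hz
  rw [F_def, norm_mul, norm_inv, ← div_eq_mul_inv] at norm_le_one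
  exact (div_le_one (norm_pos_iff.2 (denom_ne_zero z hz))).1 norm_le_one

theorem re_logDeriv_nonneg_of_norm_sub_le_norm_add {f : ℂ → ℂ} {s : ℂ}
    (hf : DifferentiableAt ℂ f s) (hle : ∀ᶠ a : ℝ in 𝓝[>] 0, ‖f (s - a)‖ ≤ ‖f (s + a)‖) :
    0 ≤ (logDeriv f s).re := by
  have hasDerivAt_add : HasDerivAt (fun a : ℝ => f (s + a)) (deriv f s) 0 :=
    HasDerivAt.comp_ofReal (z := 0) (HasDerivAt.comp_const_add s 0 (by simpa using hf.hasDerivAt))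
  have hasDerivAt_sub : HasDerivAt (fun a : ℝ => f (s - a)) (-deriv f s) 0 :=
    HasDerivAt.comp_ofReal (z := 0) (HasDerivAt.comp_const_sub s 0 (by simpa using hf.hasDerivAt))
  have hasDerivAt_norm_sq := hasDerivAt_add.norm_sq.fun_sub hasDerivAt_sub.norm_sq
  simp only [ofReal_zero, add_zero, sub_zero, inner_neg_right] at hasDerivAt_norm_sq
  have derivative_nonneg := ge_of_tendsto
    (hasDerivAt_norm_sq.tendsto_slope.mono_left (nhdsGT_le_nhdsNE 0))
    (b := 0) (by
      filter_upwards [hle, self_mem_nhdsWithin] with a norm_le (a_pos : 0 < a)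
      rw [slope_def_field]
      simp only [ofReal_zero, add_zero, sub_zero, sub_self]
      refine div_nonneg (sub_nonneg.2 ?_) a_pos.le
      gcongr)
  have re_eq : (deriv f s / f s).re = inner ℝ (f s) (deriv f s) / normSq (f s) := by
    rw [div_re, Complex.inner, mul_re, conj_re, conj_im]
    ring
  rw [logDeriv_apply, re_eq]
  exact div_nonneg (by linarith) (normSq_nonneg _)

theorem re_logDeriv_entireXi_nonneg (hRH : RiemannHypothesis) {s : ℂ} (hs : 1 / 2 < s.re) :
    0 ≤ (logDeriv entireXi s).re := by
  refine re_logDeriv_nonneg_of_norm_sub_le_norm_add (differentiable_entireXi s) ?_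
  filter_upwards [self_mem_nhdsWithin] with a (a_pos : 0 < a)
  have norm_le := norm_entireXi_le_norm_entireXi hRH a_pos (z := s - 1 / 2) (by simp; linarith)
  convert norm_le using 3 <;> ring

/-! ### The digamma function on a half-plane -/

theorem ne_neg_natCast_of_re_pos {s : ℂ} (hs : 0 < s.re) (m : ℕ) : s ≠ -m := by
  rintro rfl
  simp only [neg_re, natCast_re] at hs
  linarith [Nat.cast_nonneg (α := ℝ) m]

theorem differentiableAt_digamma {s : ℂ} (hs : 0 < s.re) : DifferentiableAt ℂ digamma s := by
  have differentiableOn_Gamma : DifferentiableOn ℂ Gamma {s | 0 < s.re} := fun z hz =>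
    (differentiableAt_Gamma z (ne_neg_natCast_of_re_pos hz)).differentiableWithinAt
  have analyticAt_Gamma := differentiableOn_Gamma.analyticAt
    ((isOpen_lt continuous_const continuous_re).mem_nhds hs)
  exact analyticAt_Gamma.deriv.differentiableAt.div analyticAt_Gamma.differentiableAt
    (Gamma_ne_zero_of_re_pos hs)

theorem digamma_ofReal {x : ℝ} (hx : 0 < x) :
    digamma x = ((deriv Real.Gamma x / Real.Gamma x : ℝ) : ℂ) := by
  have complex_deriv :=
    (differentiableAt_Gamma x (ne_neg_natCast_of_re_pos hx)).hasDerivAt.comp_ofReal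
  have real_deriv := (Real.differentiableAt_Gamma fun m =>
    (neg_nonpos.2 m.cast_nonneg).trans_lt hx |>.ne').hasDerivAt.ofReal_comp
  simp only [Gamma_ofReal] at complex_deriv
  rw [digamma_def, logDeriv_apply, complex_deriv.unique real_deriv, Gamma_ofReal, ofReal_div]

theorem log_Gamma_add_one_sub_log_Gamma {x : ℝ} (hx : 0 < x) :
    (Real.log ∘ Real.Gamma) (x + 1) - (Real.log ∘ Real.Gamma) x = Real.log x := by
  rw [Function.comp_apply, Function.comp_apply, Real.Gamma_add_one hx.ne',
    Real.log_mul hx.ne' (Real.Gamma_pos_of_pos hx).ne', add_sub_cancel_right]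

theorem re_digamma_add_one_mem_Icc {x : ℝ} (hx : 0 < x) :
    (digamma (x + 1 : ℝ)).re ∈ Set.Icc (Real.log x) (Real.log (x + 1)) := by
  have add_one_pos : 0 < x + 1 := by linarith
  have hasDerivAt_log_Gamma : HasDerivAt (Real.log ∘ Real.Gamma)
      (deriv Real.Gamma (x + 1) / Real.Gamma (x + 1)) (x + 1) :=
    (Real.differentiableAt_Gamma fun m =>
      (neg_nonpos.2 m.cast_nonneg).trans_lt add_one_pos |>.ne').hasDerivAt.log
        (Real.Gamma_pos_of_pos add_one_pos).ne'
  have slope_le := Real.convexOn_log_Gamma.slope_le_of_hasDerivAt hx add_one_pos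
    (lt_add_one x) hasDerivAt_log_Gamma
  have le_slope := Real.convexOn_log_Gamma.le_slope_of_hasDerivAt add_one_pos
    (by simpa using by linarith) (lt_add_one (x + 1)) hasDerivAt_log_Gamma
  rw [slope_def_field, log_Gamma_add_one_sub_log_Gamma hx, add_sub_cancel_left, div_one]
    at slope_le
  rw [slope_def_field, log_Gamma_add_one_sub_log_Gamma add_one_pos, add_sub_cancel_left, div_one]
    at le_slope
  rw [digamma_ofReal add_one_pos, ofReal_re]
  exact ⟨slope_le, le_slope⟩

theorem digamma_add_natCast {w : ℂ} (hw : 0 < w.re) (N : ℕ) :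
    digamma (w + N) = digamma w + ∑ n ∈ Finset.range N, (w + n)⁻¹ := by
  induction N with
  | zero => simp
  | succ N ih =>
    rw [Finset.sum_range_succ, ← add_assoc, ← ih, Nat.cast_succ, ← add_assoc,
      digamma_apply_add_one _ (ne_neg_natCast_of_re_pos (by simpa using by positivity))]

theorem tendsto_digamma_ofReal_add_natCast_sub {x : ℝ} (hx : 0 ≤ x) :
    Tendsto (fun N : ℕ => digamma (x + 1 + N) - digamma (1 + N)) atTop (𝓝 0) := by
  have log_ratio_tendsto : Tendsto (fun N : ℕ => Real.log (1 + (x + 1) / N)) atTop (𝓝 0) := by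
    have ratio_tendsto := (tendsto_const_div_atTop_nhds_zero_nat (x + 1)).const_add 1
    rw [add_zero] at ratio_tendsto
    simpa only [Real.log_one] using ratio_tendsto.log one_ne_zero
  refine squeeze_zero_norm' ?_ log_ratio_tendsto
  filter_upwards [eventually_ge_atTop 1] with N hN
  have N_pos : (0 : ℝ) < N := by exact_mod_cast hN
  have add_pos : 0 < x + N := by linarith
  have shifted_mem := re_digamma_add_one_mem_Icc add_pos
  have unshifted_mem := re_digamma_add_one_mem_Icc N_pos
  have log_le : Real.log N ≤ Real.log (x + N) := Real.log_le_log N_pos (by linarith)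
  have log_succ_le : Real.log (N + 1) ≤ Real.log (x + N + 1) :=
    Real.log_le_log (by linarith) (by linarith)
  rw [show (x + 1 + N : ℂ) = ((x + N + 1 : ℝ) : ℂ) by push_cast; ring,
    show (1 + N : ℂ) = ((N + 1 : ℝ) : ℂ) by push_cast; ring,
    show 1 + (x + 1) / N = (x + N + 1) / N by field_simp; ring,
    Real.log_div (by positivity) N_pos.ne']
  rw [digamma_ofReal (by positivity), ofReal_re] at shifted_mem unshifted_mem
  rw [digamma_ofReal (by positivity), digamma_ofReal (by positivity), ← ofReal_sub, norm_real,
    Real.norm_eq_abs, abs_le]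
  constructor <;> linarith [shifted_mem.1, shifted_mem.2, unshifted_mem.1, unshifted_mem.2]

/-- The `n`-th term `1/(n+1) - 1/(n+1+w)` of the series for `ψ(w+1) + γ`, where `ψ` is the
digamma function. -/
noncomputable def digammaTerm (n : ℕ) (w : ℂ) : ℂ := ((n : ℂ) + 1)⁻¹ - (n + 1 + w)⁻¹

theorem natCast_add_one_add_ne_zero {w : ℂ} (hw : 0 ≤ w.re) (n : ℕ) : (n : ℂ) + 1 + w ≠ 0 := by
  refine ne_zero_of_re_pos ?_
  simpa using by positivity

theorem norm_digammaTerm {w : ℂ} (hw : 0 ≤ w.re) (n : ℕ) :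
    ‖digammaTerm n w‖ = ‖w‖ / ((n + 1) * ‖(n + 1 + w : ℂ)‖) := by
  have norm_succ : ‖(n : ℂ) + 1‖ = n + 1 := by exact_mod_cast norm_natCast (n + 1)
  rw [digammaTerm, inv_sub_inv (Nat.cast_add_one_ne_zero n) (natCast_add_one_add_ne_zero hw n),
    add_sub_cancel_left, norm_div, norm_mul, norm_succ]

theorem norm_digammaTerm_le {w : ℂ} (hw : 0 ≤ w.re) (n : ℕ) :
    ‖digammaTerm n w‖ ≤ ‖w‖ * (((n + 1 : ℕ) : ℝ) ^ 2)⁻¹ := by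
  have succ_le_norm : (n : ℝ) + 1 ≤ ‖(n + 1 + w : ℂ)‖ := by
    refine le_trans ?_ (re_le_norm _)
    simpa using hw
  rw [norm_digammaTerm hw, ← div_eq_mul_inv, Nat.cast_succ, sq]
  gcongr

theorem summable_digammaTerm {w : ℂ} (hw : 0 ≤ w.re) : Summable fun n => digammaTerm n w :=
  .of_norm_bounded (((summable_nat_add_iff 1).2
    (Real.summable_nat_pow_inv.2 one_lt_two)).mul_left ‖w‖) (norm_digammaTerm_le hw)

theorem hasSum_digammaTerm_ofReal {x : ℝ} (hx : 0 ≤ x) :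
    HasSum (fun n => digammaTerm n x) (digamma (x + 1) - digamma 1) := by
  have summable := summable_digammaTerm (w := x) hx
  have remainder_eq (N : ℕ) : digamma (x + 1 + N) - digamma (1 + N) =
      (digamma (x + 1) - digamma 1) - ∑ n ∈ Finset.range N, digammaTerm n x := by
    have term_eq (n : ℕ) : digammaTerm n x = (1 + n : ℂ)⁻¹ - (x + 1 + n : ℂ)⁻¹ := by
      rw [digammaTerm, add_comm (1 : ℂ), add_assoc (x : ℂ), add_comm (x : ℂ), add_comm (1 : ℂ)]
    simp only [term_eq, Finset.sum_sub_distrib]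
    rw [digamma_add_natCast (by simpa using by positivity), digamma_add_natCast (by simp)]
    ring
  have remainder_tendsto := (tendsto_digamma_ofReal_add_natCast_sub hx).congr remainder_eq
  have limit_eq := tendsto_nhds_unique
    (summable.hasSum.tendsto_sum_nat.const_sub (digamma (x + 1) - digamma 1)) remainder_tendsto
  rw [sub_eq_zero.1 limit_eq]
  exact summable.hasSum

theorem differentiableOn_tsum_digammaTerm :
    DifferentiableOn ℂ (fun w => ∑' n, digammaTerm n w) {w | 0 < w.re} := by
  intro w hw
  have isOpen_nhd : IsOpen ({w : ℂ | 0 < w.re} ∩ Metric.ball 0 (‖w‖ + 1)) :=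
    (isOpen_lt continuous_const continuous_re).inter Metric.isOpen_ball
  refine ((differentiableOn_tsum_of_summable_norm
    (((summable_nat_add_iff 1).2 (Real.summable_nat_pow_inv.2 one_lt_two)).mul_left (‖w‖ + 1))
    (fun n => ?_) isOpen_nhd (fun n v hv => ?_)).differentiableAt
      (isOpen_nhd.mem_nhds ⟨hw, by simp⟩)).differentiableWithinAt
  · exact DifferentiableOn.fun_sub (by fun_prop) (DifferentiableOn.fun_inv (by fun_prop)
      fun v hv => natCast_add_one_add_ne_zero hv.1.le n)
  · refine (norm_digammaTerm_le hv.1.le n).trans ?_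
    gcongr
    exact (mem_ball_zero_iff.1 hv.2).le

theorem hasSum_digammaTerm {w : ℂ} (hw : 0 < w.re) :
    HasSum (fun n => digammaTerm n w) (digamma (w + 1) - digamma 1) := by
  have isOpen_halfPlane : IsOpen {w : ℂ | 0 < w.re} := isOpen_lt continuous_const continuous_re
  have differentiableOn_digamma :
      DifferentiableOn ℂ (fun w => digamma (w + 1) - digamma 1) {w | 0 < w.re} := fun v hv =>
    (((differentiableAt_digamma (by simpa using lt_add_of_pos_of_le hv zero_le_one)).comp v
      (by fun_prop)).sub_const _).differentiableWithinAt
  have ofReal_tendsto : Tendsto ofReal (𝓝[>] 1) (𝓝[≠] 1) := by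
    refine tendsto_nhdsWithin_iff.2
      ⟨(continuous_ofReal.tendsto' 1 1 ofReal_one).mono_left nhdsWithin_le_nhds, ?_⟩
    filter_upwards [self_mem_nhdsWithin] with x hx
    simpa using (Set.mem_Ioi.1 hx).ne'
  have eq_on_reals : ∃ᶠ z in 𝓝[≠] (1 : ℂ), digamma (z + 1) - digamma 1 = ∑' n, digammaTerm n z := by
    refine ofReal_tendsto.frequently (Eventually.frequently ?_)
    filter_upwards [self_mem_nhdsWithin] with x hx
    exact (hasSum_digammaTerm_ofReal (zero_le_one.trans (Set.mem_Ioi.1 hx).le)).tsum_eq.symm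
  have eqOn := (differentiableOn_digamma.analyticOnNhd isOpen_halfPlane)
    |>.eqOn_of_preconnected_of_frequently_eq
      (differentiableOn_tsum_digammaTerm.analyticOnNhd isOpen_halfPlane)
      (convex_halfSpace_re_gt 0).isPreconnected (by simp) eq_on_reals
  exact (summable_digammaTerm hw.le).hasSum_iff.2 (eqOn hw).symm

theorem sqrt_mul_sqrt_norm_le_norm_add {a : ℝ} (ha : 0 ≤ a) {w : ℂ} (hw : 0 ≤ w.re) :
    √a * √‖w‖ ≤ ‖a + w‖ := by
  rw [← Real.sqrt_mul ha]
  refine Real.sqrt_le_iff.2 ⟨norm_nonneg _, ?_⟩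
  have norm_add_sq : ‖a + w‖ ^ 2 = a ^ 2 + 2 * (a * w.re) + ‖w‖ ^ 2 := by
    simp only [← normSq_eq_norm_sq, normSq_apply, add_re, add_im, ofReal_re, ofReal_im]
    ring
  nlinarith [sq_nonneg (a - ‖w‖), mul_nonneg ha hw, mul_nonneg ha (norm_nonneg w)]

theorem norm_digammaTerm_le_growthWeight {w : ℂ} (hw : 0 < w.re) (n : ℕ) :
    ‖digammaTerm n w‖ ≤ (((n + 1 : ℕ) : ℝ) ^ (3 / 2 : ℝ))⁻¹ * growthWeight (1 / 2) w := by
  have norm_pos : 0 < ‖w‖ := norm_pos_iff.2 (ne_zero_of_re_pos hw)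
  have succ_pos : (0 : ℝ) < n + 1 := by positivity
  have denominator_pos : 0 < ‖(n + 1 + w : ℂ)‖ :=
    norm_pos_iff.2 (natCast_add_one_add_ne_zero hw.le n)
  have sqrt_le : √(n + 1) * √‖w‖ ≤ ‖(n + 1 + w : ℂ)‖ := by
    simpa using sqrt_mul_sqrt_norm_le_norm_add succ_pos.le hw.le
  rw [norm_digammaTerm hw.le, growthWeight, ← Real.sqrt_eq_rpow, Nat.cast_succ,
    show (3 / 2 : ℝ) = 1 + 1 / 2 by norm_num, Real.rpow_add succ_pos, Real.rpow_one,
    ← Real.sqrt_eq_rpow, inv_mul_eq_div, div_le_div_iff₀ (by positivity) (by positivity)]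
  calc ‖w‖ * ((n + 1) * √(n + 1)) = (n + 1) * ((√(n + 1) * √‖w‖) * √‖w‖) := by
        linear_combination (-(n + 1 : ℝ) * √(n + 1)) * Real.mul_self_sqrt norm_pos.le
    _ ≤ (n + 1) * (‖(n + 1 + w : ℂ)‖ * √(1 + ‖w‖)) := by
        gcongr
        linarith
    _ = √(1 + ‖w‖) * ((n + 1) * ‖(n + 1 + w : ℂ)‖) := by ring

theorem digamma_add_one_isBigO :
    (fun w => digamma (w + 1)) =O[𝓟 {w | 0 < w.re}] growthWeight (1 / 2) := by
  have summable : Summable fun n : ℕ => (((n + 1 : ℕ) : ℝ) ^ (3 / 2 : ℝ))⁻¹ :=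
    (summable_nat_add_iff 1).2 (Real.summable_nat_rpow_inv.2 (by norm_num))
  have series_isBigO : (fun w => digamma (w + 1) - digamma 1) =O[𝓟 {w | 0 < w.re}]
      growthWeight (1 / 2) := by
    refine isBigO_principal.2 ⟨∑' n : ℕ, (((n + 1 : ℕ) : ℝ) ^ (3 / 2 : ℝ))⁻¹, fun w hw => ?_⟩
    rw [← (hasSum_digammaTerm hw).tsum_eq, norm_growthWeight]
    exact tsum_of_norm_bounded (summable.hasSum.mul_right _)
      (norm_digammaTerm_le_growthWeight hw)
  simpa only [sub_add_cancel] using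
    series_isBigO.add (isBigO_const_growthWeight (by norm_num) (digamma 1) _)

/-! ### The logarithmic derivative `ξ'/ξ` -/

theorem differentiableAt_Gammaℝ {s : ℂ} (hs : 0 < s.re) : DifferentiableAt ℂ Gammaℝ s := by
  simpa only [inv_inv] using
    differentiable_Gammaℝ_inv.differentiableAt.fun_inv (inv_ne_zero (Gammaℝ_ne_zero_of_re_pos hs))

theorem logDeriv_Gammaℝ {s : ℂ} (hs : 0 < s.re) :
    logDeriv Gammaℝ s = (digamma (s / 2) - Real.log Real.pi) / 2 := by
  have half_re_pos : 0 < (s / 2).re := by simpa using hs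
  have pi_ne_zero : (Real.pi : ℂ) ≠ 0 := ofReal_ne_zero.2 Real.pi_ne_zero
  have hasDerivAt_cpow : HasDerivAt (fun s : ℂ => (Real.pi : ℂ) ^ (-s / 2))
      ((Real.pi : ℂ) ^ (-s / 2) * log Real.pi * (-1 / 2)) s :=
    ((hasDerivAt_id' s).fun_neg.div_const 2).const_cpow (Or.inl pi_ne_zero)
  have differentiableAt_Gamma_half : DifferentiableAt ℂ Gamma (s / 2) :=
    differentiableAt_Gamma _ (ne_neg_natCast_of_re_pos half_re_pos)
  have cpow_ne_zero : (Real.pi : ℂ) ^ (-s / 2) ≠ 0 := by simp [cpow_eq_zero_iff, pi_ne_zero]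
  have logDeriv_cpow :
      logDeriv (fun s : ℂ => (Real.pi : ℂ) ^ (-s / 2)) s = -Real.log Real.pi / 2 := by
    rw [logDeriv_apply, hasDerivAt_cpow.deriv, ofReal_log Real.pi_pos.le]
    field_simp
  have hasDerivAt_half : HasDerivAt (fun s : ℂ => s / 2) (1 / 2) s :=
    (hasDerivAt_id' s).div_const 2
  have logDeriv_Gamma_half : logDeriv (fun s : ℂ => Gamma (s / 2)) s = digamma (s / 2) / 2 := by
    refine (logDeriv_comp (f := Gamma) (g := fun s : ℂ => s / 2) differentiableAt_Gamma_half
      hasDerivAt_half.differentiableAt).trans ?_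
    rw [hasDerivAt_half.deriv, mul_one_div, digamma_def]
  rw [funext Gammaℝ_def, logDeriv_mul (f := fun s : ℂ => (Real.pi : ℂ) ^ (-s / 2))
    (g := fun s => Gamma (s / 2)) s cpow_ne_zero (Gamma_ne_zero_of_re_pos half_re_pos)
    hasDerivAt_cpow.differentiableAt
    (differentiableAt_Gamma_half.comp s hasDerivAt_half.differentiableAt),
    logDeriv_cpow, logDeriv_Gamma_half]
  ring

theorem logDeriv_entireXi_of_one_lt_re {s : ℂ} (hs : 1 < s.re) :
    logDeriv entireXi s =
      (s - 1)⁻¹ - L ↗Λ s + (digamma (s / 2 + 1) - Real.log Real.pi) / 2 := by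
  have re_pos : 0 < s.re := one_pos.trans hs
  have s_ne_zero : s ≠ 0 := ne_zero_of_re_pos re_pos
  have sub_one_ne_zero : s - 1 ≠ 0 := ne_zero_of_re_pos (by simpa using hs)
  have zeta_ne_zero : riemannZeta s ≠ 0 := riemannZeta_ne_zero_of_one_le_re hs.le
  have Gammaℝ_ne_zero := Gammaℝ_ne_zero_of_re_pos re_pos
  have differentiableAt_zeta : DifferentiableAt ℂ riemannZeta s :=
    differentiableAt_riemannZeta (sub_ne_zero.1 sub_one_ne_zero)
  have eventuallyEq : entireXi =ᶠ[𝓝 s] fun s => s * (s - 1) * Gammaℝ s * riemannZeta s := by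
    filter_upwards [(isOpen_lt continuous_const continuous_re).mem_nhds hs] with z hz
    exact entireXi_eq_Gammaℝ_mul_riemannZeta hz
  have logDeriv_sub_one : logDeriv (fun s : ℂ => s - 1) s = (s - 1)⁻¹ := by
    rw [logDeriv_apply, ((hasDerivAt_id' s).sub_const 1).deriv, one_div]
  have logDeriv_zeta : logDeriv riemannZeta s = -L ↗Λ s := by
    rw [ArithmeticFunction.LSeries_vonMangoldt_eq_deriv_riemannZeta_div hs, logDeriv_apply,
      neg_div, neg_neg]
  rw [(logDeriv_congr_nhds eventuallyEq).eq_of_nhds,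
    logDeriv_mul (f := fun s => s * (s - 1) * Gammaℝ s) s (by simp_all) zeta_ne_zero
      ((by fun_prop : DifferentiableAt ℂ (fun s : ℂ => s * (s - 1)) s).mul
        (differentiableAt_Gammaℝ re_pos)) differentiableAt_zeta,
    logDeriv_mul (f := fun s => s * (s - 1)) s (mul_ne_zero s_ne_zero sub_one_ne_zero)
      Gammaℝ_ne_zero (by fun_prop) (differentiableAt_Gammaℝ re_pos),
    logDeriv_mul (f := fun s => s) s s_ne_zero sub_one_ne_zero (by fun_prop) (by fun_prop),
    logDeriv_id', logDeriv_sub_one, logDeriv_Gammaℝ re_pos, logDeriv_zeta,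
    digamma_apply_add_one _ (ne_neg_natCast_of_re_pos (by simpa using re_pos))]
  field_simp
  ring

theorem logDeriv_entireXi_one :
    logDeriv entireXi 1 =
      ((1 + (Real.eulerMascheroniConstant - Real.log (4 * Real.pi)) / 2 : ℝ) : ℂ) := by
  have hasDerivAt_entireXi : HasDerivAt entireXi (completedRiemannZeta₀ 1) 1 := by
    refine ((((hasDerivAt_id' (1 : ℂ)).fun_mul ((hasDerivAt_id' (1 : ℂ)).sub_const 1)).fun_mul
      (differentiable_completedZeta₀ 1).hasDerivAt).add_const 1).congr_deriv ?_
    simp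
  rw [logDeriv_apply, entireXi_one, hasDerivAt_entireXi.deriv, completedRiemannZeta₀_one, div_one]
  push_cast [ofReal_log (show 0 ≤ 4 * Real.pi by positivity)]
  ring

theorem differentiableOn_logDeriv_entireXi (hRH : RiemannHypothesis) :
    DifferentiableOn ℂ (logDeriv entireXi) {s | 1 / 2 < s.re} := fun s hs =>
  ((differentiable_entireXi.analyticAt s).deriv.differentiableAt.div (differentiable_entireXi s)
    (entireXi_ne_zero_of_RH hRH hs)).differentiableWithinAt

theorem growthWeight_le_mul {p A : ℝ} (hp : 0 ≤ p) (hA : 0 ≤ A) {z w : ℂ}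
    (hzw : 1 + ‖z‖ ≤ A * (1 + ‖w‖)) : growthWeight p z ≤ A ^ p * growthWeight p w := by
  rw [growthWeight, growthWeight, ← Real.mul_rpow hA (by positivity)]
  exact Real.rpow_le_rpow (by positivity) hzw hp

theorem logDeriv_entireXi_isBigO {σ : ℝ} (hσ : 1 < σ) :
    logDeriv entireXi =O[𝓟 {s | σ ≤ s.re}] growthWeight (1 / 2) := by
  have bounded_isBigO {f : ℂ → ℂ} (hf : f =O[𝓟 {s | σ ≤ s.re}] fun _ => (1 : ℂ)) :
      f =O[𝓟 {s | σ ≤ s.re}] growthWeight (1 / 2) :=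
    hf.trans (isBigO_const_growthWeight (by norm_num) 1 _)
  have pole_isBigO : (fun s : ℂ => (s - 1)⁻¹) =O[𝓟 {s | σ ≤ s.re}] growthWeight (1 / 2) :=
    (inv_sub_isBigO_growthWeight_of_lt_re hσ).trans
      (growthWeight_isBigO_growthWeight (by norm_num) _)
  have half_isBigO : (fun s => growthWeight (1 / 2) (s / 2)) =O[𝓟 {s | σ ≤ s.re}]
      growthWeight (1 / 2) := by
    refine IsBigO.of_norm_le fun s => ?_
    rw [norm_growthWeight, growthWeight, growthWeight, norm_div, Complex.norm_ofNat]
    gcongr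
    linarith [norm_nonneg s]
  have tendsto_half : Tendsto (fun s : ℂ => s / 2) (𝓟 {s | σ ≤ s.re}) (𝓟 {w | 0 < w.re}) :=
    tendsto_principal_principal.2 fun s (hs : σ ≤ s.re) => by
      simpa using one_pos.trans (hσ.trans_le hs)
  have digamma_isBigO : (fun s => digamma (s / 2 + 1)) =O[𝓟 {s | σ ≤ s.re}]
      growthWeight (1 / 2) :=
    (digamma_add_one_isBigO.comp_tendsto tendsto_half).trans half_isBigO
  refine ((pole_isBigO.sub (bounded_isBigO (LSeries_isBigO_one
    (ArithmeticFunction.LSeriesSummable_vonMangoldt (by simpa))))).add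
    ((digamma_isBigO.sub (isBigO_const_growthWeight (by norm_num) (Real.log Real.pi : ℂ) _)
      ).const_mul_left (1 / 2))).congr' (eventually_principal.2 fun s hs => ?_) .rfl
  simp only [logDeriv_entireXi_of_one_lt_re (hσ.trans_le hs), one_div_mul_eq_div]

theorem norm_le_of_re_nonneg_ball {g : ℂ → ℂ} {c z : ℂ} {R : ℝ}
    (hg : DifferentiableOn ℂ g (Metric.ball c R)) (hre : ∀ w ∈ Metric.ball c R, 0 ≤ (g w).re)
    (hz : ‖z - c‖ < R) : ‖g z‖ ≤ ‖g c‖ * (R + ‖z - c‖) / (R - ‖z - c‖) := by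
  have bound {A : ℝ} (hA : 0 < A) : ‖g z‖ ≤ 2 * A * ‖z - c‖ / (R - ‖z - c‖) +
      ‖g c‖ * (R + ‖z - c‖) / (R - ‖z - c‖) := by
    simpa only [norm_neg] using borelCaratheodory_ball hA hg.fun_neg
      (fun w hw => by rw [neg_re]; linarith [hre w hw]) hz
  have bound_tendsto : Tendsto (fun A : ℝ => 2 * A * ‖z - c‖ / (R - ‖z - c‖) +
      ‖g c‖ * (R + ‖z - c‖) / (R - ‖z - c‖)) (𝓝[>] 0)
      (𝓝 (2 * 0 * ‖z - c‖ / (R - ‖z - c‖) + ‖g c‖ * (R + ‖z - c‖) / (R - ‖z - c‖))) :=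
    (Continuous.tendsto (by fun_prop) 0).mono_left nhdsWithin_le_nhds
  simpa only [mul_zero, zero_mul, zero_div, zero_add] using
    ge_of_tendsto bound_tendsto (eventually_nhdsWithin_of_forall fun A hA => bound hA)

theorem norm_logDeriv_entireXi_le_of_RH (hRH : RiemannHypothesis) {σ : ℝ} (hσ : 1 / 2 < σ) {s : ℂ}
    (hs : σ ≤ s.re) (hs' : s.re ≤ 2) :
    ‖logDeriv entireXi s‖ ≤ 3 / (σ - 1 / 2) * ‖logDeriv entireXi (2 + s.im * I)‖ := by
  have ball_subset : ∀ w ∈ Metric.ball (2 + s.im * I) (3 / 2), 1 / 2 < w.re := fun w hw => by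
    have re_sub_le := (abs_re_le_norm _).trans_lt (mem_ball_iff_norm.1 hw)
    simp only [sub_re, add_re, re_ofNat, mul_re, ofReal_re, I_re, mul_zero, ofReal_im, I_im,
      zero_mul, sub_zero, add_zero] at re_sub_le
    linarith [(abs_lt.1 re_sub_le).1]
  have norm_sub_center : ‖s - (2 + s.im * I)‖ = 2 - s.re := by
    rw [show s - (2 + s.im * I) = -((2 - s.re : ℝ) : ℂ) by apply Complex.ext <;> simp, norm_neg,
      norm_real, Real.norm_of_nonneg (sub_nonneg.2 hs')]
  have bound := norm_le_of_re_nonneg_ball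
    ((differentiableOn_logDeriv_entireXi hRH).mono ball_subset)
    (fun w hw => re_logDeriv_entireXi_nonneg hRH (ball_subset w hw))
    (norm_sub_center.trans_lt (by linarith))
  rw [norm_sub_center] at bound
  refine bound.trans ?_
  rw [mul_comm, mul_div_right_comm]
  exact mul_le_mul_of_nonneg_right
    (div_le_div₀ (by norm_num) (by linarith) (by linarith) (by linarith)) (norm_nonneg _)

theorem logDeriv_entireXi_isBigO_of_RH (hRH : RiemannHypothesis) {σ : ℝ} (hσ : 1 / 2 < σ) :
    logDeriv entireXi =O[𝓟 {s | σ ≤ s.re}] growthWeight (1 / 2) := by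
  have right_isBigO := logDeriv_entireXi_isBigO one_lt_two
  have line_isBigO : (fun s : ℂ => logDeriv entireXi (2 + s.im * I))
      =O[⊤] fun s => growthWeight (1 / 2) (2 + s.im * I) :=
    right_isBigO.comp_tendsto (tendsto_principal.2 (.of_forall fun s => by simp))
  have weight_isBigO : (fun s : ℂ => growthWeight (1 / 2) (2 + s.im * I))
      =O[⊤] growthWeight (1 / 2) := by
    refine IsBigO.of_bound (3 ^ (1 / 2 : ℝ)) (.of_forall fun s => ?_)
    rw [norm_growthWeight, norm_growthWeight]
    refine growthWeight_le_mul (by norm_num) (by norm_num) ?_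
    have norm_le := norm_add_le (2 : ℂ) (s.im * I)
    rw [Complex.norm_ofNat, norm_mul, norm_I, mul_one, norm_real, Real.norm_eq_abs] at norm_le
    linarith [abs_im_le_norm s, norm_nonneg s]
  have norm_le_of_strip : ∀ s ∈ {s : ℂ | σ ≤ s.re ∧ s.re ≤ 2},
      ‖logDeriv entireXi s‖ ≤ 3 / (σ - 1 / 2) * ‖logDeriv entireXi (2 + s.im * I)‖ := fun s hs =>
    norm_logDeriv_entireXi_le_of_RH hRH hσ hs.1 hs.2
  have strip_isBigO : logDeriv entireXi =O[𝓟 {s | σ ≤ s.re ∧ s.re ≤ 2}] growthWeight (1 / 2) :=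
    (isBigO_principal.2 ⟨_, norm_le_of_strip⟩).trans
      ((line_isBigO.trans weight_isBigO).mono le_top)
  refine (strip_isBigO.sup right_isBigO).mono ?_
  rw [sup_principal, principal_mono]
  exact fun s hs => (le_total s.re 2).imp (And.intro hs) fun two_le => two_le

/-! ### Poisson integrals in a half-plane -/

theorem integral_univ_inv_sq_add_sq {b : ℝ} (hb : 0 < b) :
    ∫ y : ℝ, (b ^ 2 + y ^ 2)⁻¹ = Real.pi / b := by
  have rescale (y : ℝ) : (b ^ 2 + y ^ 2)⁻¹ = (b ^ 2)⁻¹ * (1 + (y / b) ^ 2)⁻¹ := by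
    rw [← mul_inv, mul_add, div_pow, mul_div_cancel₀ _ (by positivity), mul_one]
  simp only [rescale]
  rw [integral_const_mul, Measure.integral_comp_div (fun y : ℝ => (1 + y ^ 2)⁻¹) b,
    integral_univ_inv_one_add_sq, abs_of_pos hb, smul_eq_mul]
  field_simp

theorem integrable_inv_sq_add_sq {b : ℝ} (hb : 0 < b) :
    Integrable fun y : ℝ => (b ^ 2 + y ^ 2)⁻¹ :=
  .of_integral_ne_zero <| by rw [integral_univ_inv_sq_add_sq hb]; positivity

theorem ofReal_sq_add_sq_eq (σ c y : ℝ) :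
    (((c - σ) ^ 2 + y ^ 2 : ℝ) : ℂ) = -((σ + y * I - c) * (σ + y * I - (2 * σ - c : ℝ))) := by
  push_cast
  linear_combination (y : ℂ) ^ 2 * I_sq

theorem norm_vertical_sub_sq (σ c y : ℝ) :
    ‖(σ + y * I - c : ℂ)‖ ^ 2 = (c - σ) ^ 2 + y ^ 2 := by
  rw [← normSq_eq_norm_sq, normSq_apply]
  simp only [sub_re, add_re, ofReal_re, mul_re, I_re, ofReal_im, I_im, sub_im, add_im, mul_im]
  ring

theorem vertical_ne {σ c : ℝ} (hσ : σ ≠ c) (y : ℝ) : (σ + y * I : ℂ) ≠ c := fun h =>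
  hσ (by simpa using congrArg re h)

theorem isClosed_setOf_le_re (σ : ℝ) : IsClosed {s : ℂ | σ ≤ s.re} :=
  isClosed_le continuous_const continuous_re

theorem setOf_le_re_mem_nhds {σ : ℝ} {s : ℂ} (hs : σ < s.re) : {s : ℂ | σ ≤ s.re} ∈ 𝓝 s :=
  continuous_re.continuousAt.eventually_const_le hs

theorem differentiableOn_inv_sub_of_lt_re {p : ℂ} {a : ℝ} (ha : p.re < a) :
    DifferentiableOn ℂ (fun s => (s - p)⁻¹) {s | a ≤ s.re} :=
  DifferentiableOn.fun_inv (by fun_prop) fun _ hs =>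
    sub_ne_zero.2 fun h => (ha.trans_le hs).ne' (congrArg re h)

theorem differentiableOn_inv_sub_of_re_lt {p : ℂ} {a : ℝ} (ha : a < p.re) :
    DifferentiableOn ℂ (fun s => (s - p)⁻¹) {s | s.re ≤ a} :=
  DifferentiableOn.fun_inv (by fun_prop) fun _ hs =>
    sub_ne_zero.2 fun h => (hs.out.trans_lt ha).ne (congrArg re h)

theorem dslope_isBigO_growthWeight {f : ℂ → ℂ} {S : Set ℂ} {c : ℂ} {p : ℝ} (hS : IsClosed S)
    (hc : S ∈ 𝓝 c) (hf : DifferentiableOn ℂ f S) (hp : 0 ≤ p) (hO : f =O[𝓟 S] growthWeight p) :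
    dslope f c =O[𝓟 S] growthWeight (p - 1) := by
  refine isBigO_growthWeight_of_away hS ((differentiableOn_dslope hc).2 hf).continuousOn c
    (r := 1) ?_
  have sub_isBigO : (fun z => f z - f c) =O[𝓟 (S ∩ {z | 1 ≤ ‖z - c‖})] growthWeight p :=
    (hO.mono (principal_mono.2 Set.inter_subset_left)).sub (isBigO_const_growthWeight hp _ _)
  have inv_isBigO := (inv_sub_isBigO_growthWeight c one_pos).mono
    (principal_mono.2 (Set.inter_subset_right (s := S)))
  refine (isBigO_growthWeight_mul sub_isBigO inv_isBigO le_rfl).congr'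
    (eventually_principal.2 fun z hz => ?_) .rfl
  have ne : z ≠ c := fun h => by simpa [h] using hz.2.out.trans_lt' one_pos
  rw [dslope_of_ne f ne, slope_def_field, div_eq_mul_inv]

section PoissonIntegral

variable {G : ℂ → ℂ} {σ c p : ℝ}

theorem integrable_vertical_div_sq_add_sq (hσ : σ < c) (hp : p < 1)
    (hG : ContinuousOn G {s | σ ≤ s.re}) (hO : G =O[𝓟 {s | σ ≤ s.re}] growthWeight p) :
    Integrable fun y : ℝ => G (σ + y * I) / (((c - σ) ^ 2 + y ^ 2 : ℝ) : ℂ) := by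
  have lt_re : σ < (c : ℂ).re := hσ
  have re_lt : ((2 * σ - c : ℝ) : ℂ).re < σ := by rw [ofReal_re]; linarith
  have line_left : {s : ℂ | s.re = σ} ⊆ {s | s.re ≤ σ} := fun s hs => hs.out.le
  have line_right : {s : ℂ | s.re = σ} ⊆ {s | σ ≤ s.re} := fun s hs => hs.out.ge
  have continuousOn_line := ((hG.mono line_right).fun_mul
    (((differentiableOn_inv_sub_of_re_lt lt_re).continuousOn.mono line_left).fun_mul
      ((differentiableOn_inv_sub_of_lt_re re_lt).continuousOn.mono line_right))).fun_neg
  have isBigO_line := (isBigO_growthWeight_mul (hO.mono (principal_mono.2 line_right))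
    (isBigO_growthWeight_mul
      ((inv_sub_isBigO_growthWeight_of_re_lt lt_re).mono (principal_mono.2 line_left))
      ((inv_sub_isBigO_growthWeight_of_lt_re re_lt).mono (principal_mono.2 line_right)) le_rfl)
    le_rfl).neg_left
  refine (integrable_vertical (a := σ) (by linarith) (by simp) continuousOn_line
    isBigO_line).congr (.of_forall fun y => ?_)
  simp only [ofReal_sq_add_sq_eq]
  rw [div_neg, div_eq_mul_inv, mul_inv]

theorem integral_vertical_div_sq_add_sq (hσ : σ < c) (hp : p < 1)
    (hG : DifferentiableOn ℂ G {s | σ ≤ s.re}) (hO : G =O[𝓟 {s | σ ≤ s.re}] growthWeight p) :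
    ∫ y : ℝ, G (σ + y * I) / (((c - σ) ^ 2 + y ^ 2 : ℝ) : ℂ) = G c * (Real.pi / (c - σ) : ℝ) := by
  have mem_nhds := setOf_le_re_mem_nhds (s := (c : ℂ)) hσ
  have mirror_lt : ((2 * σ - c : ℝ) : ℂ).re < σ := by rw [ofReal_re]; linarith
  have dslope_isBigO := dslope_isBigO_growthWeight (isClosed_setOf_le_re σ) mem_nhds hG
    (le_max_right p 0) (hO.trans (growthWeight_isBigO_growthWeight (le_max_left p 0) _))
  have vanishing := integral_vertical_eq_zero (p := max p 0 - 1 + -1)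
    (by linarith [max_lt hp one_pos])
    ((((differentiableOn_dslope mem_nhds).2 hG).fun_mul
      (differentiableOn_inv_sub_of_lt_re mirror_lt)).fun_neg)
    (isBigO_growthWeight_mul dslope_isBigO (inv_sub_isBigO_growthWeight_of_lt_re mirror_lt)
      le_rfl).neg_left
  have integrable_const : Integrable fun y : ℝ => G c * (((c - σ) ^ 2 + y ^ 2)⁻¹ : ℝ) :=
    (integrable_inv_sq_add_sq (sub_pos.2 hσ)).ofReal.const_mul (G c)
  have decomposition (y : ℝ) :
      -(dslope G c (σ + y * I) * (σ + y * I - (2 * σ - c : ℝ))⁻¹) =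
        G (σ + y * I) / (((c - σ) ^ 2 + y ^ 2 : ℝ) : ℂ) -
          G c * (((c - σ) ^ 2 + y ^ 2)⁻¹ : ℝ) := by
    rw [ofReal_inv, ← div_eq_mul_inv (G c), ← sub_div, ofReal_sq_add_sq_eq,
      dslope_of_ne G (vertical_ne hσ.ne y), slope_def_field, div_neg, ← div_div, div_eq_mul_inv _
        (_ - ((2 * σ - c : ℝ) : ℂ))]
  simp only [decomposition] at vanishing
  rw [integral_sub (integrable_vertical_div_sq_add_sq hσ hp hG.continuousOn hO) integrable_const,
    sub_eq_zero, integral_const_mul, integral_complex_ofReal,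
    integral_univ_inv_sq_add_sq (sub_pos.2 hσ)] at vanishing
  exact vanishing

theorem cpow_isBigO_growthWeight_zero {x B : ℝ} (hx : 1 ≤ x) {f : ℂ → ℂ} {S : Set ℂ}
    (hf : ∀ s ∈ S, (f s).re ≤ B) : (fun s => (x : ℂ) ^ f s) =O[𝓟 S] growthWeight 0 := by
  refine isBigO_principal.2 ⟨x ^ B, fun s hs => ?_⟩
  rw [norm_growthWeight, growthWeight_zero, mul_one, norm_cpow_eq_rpow_re_of_pos (by positivity)]
  exact Real.rpow_le_rpow_of_exponent_le hx (hf s hs)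

theorem norm_mul_cpow_div_sq {x : ℝ} (hx : 0 < x) (z : ℂ) (y : ℝ) :
    ‖z * (x : ℂ) ^ (σ + y * I - c) / (σ + y * I - c) ^ 2‖ =
      x ^ (σ - c) * (‖z‖ / ((c - σ) ^ 2 + y ^ 2)) := by
  rw [norm_div, norm_mul, norm_pow, norm_vertical_sub_sq, norm_cpow_eq_rpow_re_of_pos hx,
    show (σ + y * I - c : ℂ).re = σ - c by simp]
  ring

theorem integrable_mul_cpow_div_sq {x : ℝ} (hx : 0 < x) (hσ : σ ≠ c) {g : ℝ → ℂ}
    (hg : Continuous g) (hi : Integrable fun y => g y / (((c - σ) ^ 2 + y ^ 2 : ℝ) : ℂ)) :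
    Integrable fun y : ℝ => g y * (x : ℂ) ^ (σ + y * I - c) / (σ + y * I - c) ^ 2 := by
  have continuous_cpow : Continuous fun y : ℝ => (x : ℂ) ^ (σ + y * I - c) :=
    Continuous.const_cpow (by fun_prop) (.inl (ofReal_ne_zero.2 hx.ne'))
  refine (hi.norm.const_mul (x ^ (σ - c))).mono' ((hg.mul continuous_cpow).div (by fun_prop)
    fun y => pow_ne_zero 2 (sub_ne_zero.2 (vertical_ne hσ y))).aestronglyMeasurable
    (.of_forall fun y => ?_)
  rw [norm_mul_cpow_div_sq hx, norm_div, norm_real, Real.norm_of_nonneg (by positivity)]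

/-- Conjugating on the line `Re s = σ` amounts to the substitution `s ↦ 2σ - s`, which turns the
left-hand integrand into a function holomorphic and decaying in `Re s ≥ σ`. -/
theorem integral_conj_mul_cpow_div_sq_eq_zero {x : ℝ} (hx : 1 ≤ x) (hσ : σ < c) (hp : p < 1)
    (hG : DifferentiableOn ℂ G {s | σ ≤ s.re}) (hO : G =O[𝓟 {s | σ ≤ s.re}] growthWeight p) :
    ∫ y : ℝ, conj (G (σ + y * I)) * (x : ℂ) ^ (σ + y * I - c) / (σ + y * I - c) ^ 2 = 0 := by
  set q : ℂ := ((2 * σ - c : ℝ) : ℂ) with hq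
  have x_ne_zero : (x : ℂ) ≠ 0 := ofReal_ne_zero.2 (by positivity)
  have re_q_lt : q.re < σ := by rw [hq, ofReal_re]; linarith
  have inv_isBigO := inv_sub_isBigO_growthWeight_of_lt_re re_q_lt
  have differentiableOn_inv := differentiableOn_inv_sub_of_lt_re re_q_lt
  have cpow_isBigO : (fun s => (x : ℂ) ^ (q - s)) =O[𝓟 {s | σ ≤ s.re}] growthWeight 0 :=
    cpow_isBigO_growthWeight_zero (B := 0) hx fun s hs =>
      sub_nonpos.2 (re_q_lt.le.trans hs)
  have vanishing := integral_vertical_eq_zero (p := p + (-1 + -1) + 0) (by linarith)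
    ((hG.fun_mul (differentiableOn_inv.fun_mul differentiableOn_inv)).fun_mul
      (DifferentiableOn.const_cpow (by fun_prop) (.inl x_ne_zero)))
    (isBigO_growthWeight_mul (isBigO_growthWeight_mul hO
      (isBigO_growthWeight_mul inv_isBigO inv_isBigO le_rfl) le_rfl) cpow_isBigO le_rfl)
  have conj_eq (y : ℝ) : conj (q - (σ + y * I)) = σ + y * I - c := by
    simp only [hq, map_sub, map_add, map_mul, conj_ofReal, conj_I]
    push_cast
    ring
  have conj_cpow_eq (y : ℝ) :
      conj ((x : ℂ) ^ (q - (σ + y * I))) = (x : ℂ) ^ (σ + y * I - c) := by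
    have arg_ne_pi : arg (x : ℂ) ≠ Real.pi := by
      rw [arg_ofReal_of_nonneg (by positivity)]
      exact Real.pi_ne_zero.symm
    rw [← conj_eq, cpow_conj _ _ arg_ne_pi, conj_ofReal]
  rw [← map_eq_zero conj, ← integral_conj, ← vanishing]
  congr 1 with y
  rw [map_div₀, map_mul, map_pow, conj_conj, ← conj_cpow_eq, conj_conj, ← conj_eq, conj_conj,
    sub_sq_comm q, div_eq_mul_inv, sq, mul_inv]
  ring

theorem norm_integral_mul_cpow_div_sq_le {x : ℝ} (hx : 1 ≤ x) (hσ : σ < c) (hp : p < 1)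
    (hG : DifferentiableOn ℂ G {s | σ ≤ s.re}) (hO : G =O[𝓟 {s | σ ≤ s.re}] growthWeight p)
    (hre : ∀ y : ℝ, 0 ≤ (G (σ + y * I)).re) :
    ‖∫ y : ℝ, G (σ + y * I) * (x : ℂ) ^ (σ + y * I - c) / (σ + y * I - c) ^ 2‖ ≤
      2 * x ^ (σ - c) * ((G c).re * (Real.pi / (c - σ))) := by
  have x_pos : 0 < x := one_pos.trans_le hx
  have continuous_line : Continuous fun y : ℝ => G (σ + y * I) :=
    hG.continuousOn.comp_continuous (by fun_prop) (by simp)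
  have integrable_quotient := integrable_vertical_div_sq_add_sq hσ hp hG.continuousOn hO
  have integrable_conj_quotient : Integrable fun y : ℝ =>
      conj (G (σ + y * I)) / (((c - σ) ^ 2 + y ^ 2 : ℝ) : ℂ) := by
    simpa [map_div₀, conj_ofReal] using
      (conjCLE : ℂ →L[ℝ] ℂ).integrable_comp integrable_quotient
  have norm_add_conj (y : ℝ) :
      ‖G (σ + y * I) * (x : ℂ) ^ (σ + y * I - c) / (σ + y * I - c) ^ 2 +
        conj (G (σ + y * I)) * (x : ℂ) ^ (σ + y * I - c) / (σ + y * I - c) ^ 2‖ =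
      2 * x ^ (σ - c) * (G (σ + y * I) / (((c - σ) ^ 2 + y ^ 2 : ℝ) : ℂ)).re := by
    rw [← add_div, ← add_mul, norm_mul_cpow_div_sq x_pos, add_conj, norm_real,
      Real.norm_of_nonneg (mul_nonneg zero_le_two (hre y)), div_ofReal_re]
    ring
  rw [← add_zero (∫ y : ℝ, _), ← integral_conj_mul_cpow_div_sq_eq_zero hx hσ hp hG hO,
    ← integral_add (integrable_mul_cpow_div_sq x_pos hσ.ne continuous_line integrable_quotient)
      (integrable_mul_cpow_div_sq x_pos hσ.ne (g := fun y => conj (G (σ + y * I)))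
        (continuous_conj.comp continuous_line) integrable_conj_quotient)]
  refine (norm_integral_le_integral_norm _).trans_eq ?_
  simp only [norm_add_conj]
  have integral_re_eq : ∫ y : ℝ, (G (σ + y * I) / (((c - σ) ^ 2 + y ^ 2 : ℝ) : ℂ)).re =
      (∫ y : ℝ, G (σ + y * I) / (((c - σ) ^ 2 + y ^ 2 : ℝ) : ℂ)).re :=
    integral_re integrable_quotient
  rw [integral_const_mul, integral_re_eq, integral_vertical_div_sq_add_sq hσ hp hG hO,
    re_mul_ofReal]

end PoissonIntegral

theorem integral_vertical_eq_zero_of_re_le {F : ℂ → ℂ} {a p : ℝ} (hp : p < -1)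
    (hF : DifferentiableOn ℂ F {s | s.re ≤ a}) (hO : F =O[𝓟 {s | s.re ≤ a}] growthWeight p) :
    ∫ y : ℝ, F (a + y * I) = 0 := by
  have mapsTo_neg : Set.MapsTo Neg.neg {s : ℂ | -a ≤ s.re} {s | s.re ≤ a} := fun s hs => by
    simpa using neg_le.1 hs.out
  have neg_isBigO : (fun s => F (-s)) =O[𝓟 {s | -a ≤ s.re}] growthWeight p :=
    (hO.comp_tendsto (tendsto_principal_principal.2 mapsTo_neg)).trans
      (isBigO_of_le _ fun s => by simp [growthWeight])
  have vanishing := integral_vertical_eq_zero hp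
    (hF.comp (differentiableOn_neg _) mapsTo_neg) neg_isBigO
  rw [← vanishing, ← integral_neg_eq_self]
  congr 1 with y
  simp [add_comm]

/-! ### The regularized kernel -/

/-- `G(s) / (s - 1)²` with its double pole at `1` removed: see `regularizedKernel_eq`. The last
summand cancels the decay-spoiling term `-G'(1) / (s - 1)` at the price of a pole at `2`. -/
noncomputable def regularizedKernel (G : ℂ → ℂ) (s : ℂ) : ℂ :=
  dslope (dslope G 1) 1 s + deriv G 1 * (s - 2)⁻¹

section RegularizedKernel

variable {G : ℂ → ℂ} {σ b p : ℝ}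

theorem regularizedKernel_eq_dslope {s : ℂ} (one_ne : s ≠ 1) (two_ne : s ≠ 2) :
    regularizedKernel G s =
      dslope G 1 s * (s - 1)⁻¹ + deriv G 1 * ((s - 1)⁻¹ * (s - 2)⁻¹) := by
  have sub_one_ne := sub_ne_zero.2 one_ne
  have sub_two_ne := sub_ne_zero.2 two_ne
  rw [regularizedKernel, dslope_of_ne _ one_ne, slope_def_field, dslope_same]
  field_simp
  ring

theorem regularizedKernel_eq {s : ℂ} (one_ne : s ≠ 1) (two_ne : s ≠ 2) :
    regularizedKernel G s =
      (G s - G 1) / (s - 1) ^ 2 + deriv G 1 / ((s - 1) * (s - 2)) := by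
  rw [regularizedKernel_eq_dslope one_ne two_ne, dslope_of_ne _ one_ne, slope_def_field, sq,
    ← div_div, ← div_eq_mul_inv, ← mul_inv, ← div_eq_mul_inv]

theorem differentiableOn_regularizedKernel (hσ : σ < 1) (hb : b < 2)
    (hG : DifferentiableOn ℂ G {s | σ ≤ s.re}) :
    DifferentiableOn ℂ (regularizedKernel G) {s | σ ≤ s.re ∧ s.re ≤ b} := by
  have mem_nhds := setOf_le_re_mem_nhds (s := 1) hσ
  have dslope_dslope :=
    (differentiableOn_dslope mem_nhds).2 ((differentiableOn_dslope mem_nhds).2 hG)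
  exact (dslope_dslope.mono fun s hs => hs.1).fun_add
    (((differentiableOn_inv_sub_of_re_lt (p := 2) hb).mono fun s hs => hs.2).const_mul _)

theorem regularizedKernel_isBigO (hσ : σ < 1) (hb : b < 2) (hp : 0 ≤ p)
    (hG : DifferentiableOn ℂ G {s | σ ≤ s.re}) (hO : G =O[𝓟 {s | σ ≤ s.re}] growthWeight p) :
    regularizedKernel G =O[𝓟 {s | σ ≤ s.re ∧ s.re ≤ b}] growthWeight (p - 2) := by
  refine isBigO_growthWeight_of_away ((isClosed_setOf_le_re σ).inter
    (isClosed_le continuous_re continuous_const))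
    (differentiableOn_regularizedKernel hσ hb hG).continuousOn 1 (r := 1) ?_
  set T := {s : ℂ | σ ≤ s.re ∧ s.re ≤ b} ∩ {s | 1 ≤ ‖s - 1‖}
  have dslope_isBigO : dslope G 1 =O[𝓟 T] growthWeight (p - 1) :=
    (dslope_isBigO_growthWeight (isClosed_setOf_le_re σ) (setOf_le_re_mem_nhds hσ) hG hp hO).mono
      (principal_mono.2 fun s hs => hs.1.1)
  have inv_sub_one_isBigO : (fun s : ℂ => (s - 1)⁻¹) =O[𝓟 T] growthWeight (-1) :=
    (inv_sub_isBigO_growthWeight 1 one_pos).mono (principal_mono.2 fun s hs => hs.2)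
  have inv_sub_two_isBigO : (fun s : ℂ => (s - 2)⁻¹) =O[𝓟 T] growthWeight (-1) :=
    (inv_sub_isBigO_growthWeight_of_re_lt (p := 2) hb).mono (principal_mono.2 fun s hs => hs.1.2)
  refine ((isBigO_growthWeight_mul dslope_isBigO inv_sub_one_isBigO (r := p - 2)
    (by linarith)).add ((isBigO_growthWeight_mul inv_sub_one_isBigO inv_sub_two_isBigO
      (r := p - 2) (by linarith)).const_mul_left (deriv G 1))).congr'
    (eventually_principal.2 fun s hs => (regularizedKernel_eq_dslope ?_ ?_).symm) .rfl
  · rintro rfl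
    simpa using hs.2.out.trans_lt' one_pos
  · rintro rfl
    simpa using hs.1.2.trans_lt hb

theorem integrable_regularizedKernel (hσ : σ < 1) (hσb : σ ≤ b) (hb : b < 2) (hp : 0 ≤ p)
    (hp' : p < 1) (hG : DifferentiableOn ℂ G {s | σ ≤ s.re})
    (hO : G =O[𝓟 {s | σ ≤ s.re}] growthWeight p) :
    Integrable fun y : ℝ => regularizedKernel G (b + y * I) :=
  integrable_vertical (by linarith) (by simp [hσb])
    (differentiableOn_regularizedKernel hσ hb hG).continuousOn
    (regularizedKernel_isBigO hσ hb hp hG hO)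

theorem integral_pole_mul_cpow_eq_zero {x : ℝ} (hx : 1 ≤ x) (hσ : σ < 1) (A B : ℂ) :
    (Integrable fun y : ℝ => ((A * (σ + y * I - 1)⁻¹ - B * (σ + y * I - 2)⁻¹) *
      (σ + y * I - 1)⁻¹) * (x : ℂ) ^ (σ + y * I - 1 : ℂ)) ∧
    ∫ y : ℝ, ((A * (σ + y * I - 1)⁻¹ - B * (σ + y * I - 2)⁻¹) * (σ + y * I - 1)⁻¹) *
      (x : ℂ) ^ (σ + y * I - 1 : ℂ) = 0 := by
  have lt_two : σ < (2 : ℂ).re := hσ.trans one_lt_two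
  have inv_sub_one_isBigO := inv_sub_isBigO_growthWeight_of_re_lt (p := 1) hσ
  have inv_sub_two_isBigO := inv_sub_isBigO_growthWeight_of_re_lt lt_two
  have cpow_isBigO : (fun s => (x : ℂ) ^ (s - 1)) =O[𝓟 {s | s.re ≤ σ}] growthWeight 0 :=
    cpow_isBigO_growthWeight_zero (B := σ - 1) hx fun s hs => sub_le_sub_right hs.out 1
  have isBigO := isBigO_growthWeight_mul (isBigO_growthWeight_mul
    ((inv_sub_one_isBigO.const_mul_left A).sub (inv_sub_two_isBigO.const_mul_left B))
    inv_sub_one_isBigO le_rfl) cpow_isBigO (r := -2) (by norm_num)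
  have differentiableOn := (((((differentiableOn_inv_sub_of_re_lt (p := 1) hσ).const_mul A).fun_sub
    ((differentiableOn_inv_sub_of_re_lt lt_two).const_mul B)).fun_mul
      (differentiableOn_inv_sub_of_re_lt (p := 1) hσ)).fun_mul
    (DifferentiableOn.const_cpow (f := fun s => s - 1) (by fun_prop)
      (.inl (ofReal_ne_zero.2 (one_pos.trans_le hx).ne'))))
  exact ⟨integrable_vertical (a := σ) (by norm_num) (by simp) differentiableOn.continuousOn isBigO,
    integral_vertical_eq_zero_of_re_le (by norm_num) differentiableOn isBigO⟩

theorem integral_regularizedKernel_mul_cpow {x : ℝ} (hx : 1 ≤ x) (hσ : σ < 1) (hσb : σ ≤ b)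
    (hb : b < 2) (hp : 0 ≤ p) (hp' : p < 1)
    (hG : DifferentiableOn ℂ G {s | σ ≤ s.re}) (hO : G =O[𝓟 {s | σ ≤ s.re}] growthWeight p) :
    ∫ y : ℝ, regularizedKernel G (b + y * I) * (x : ℂ) ^ (b + y * I - 1 : ℂ) =
      ∫ y : ℝ, G (σ + y * I) * (x : ℂ) ^ (σ + y * I - 1 : ℂ) / (σ + y * I - 1) ^ 2 := by
  have x_pos : 0 < x := one_pos.trans_le hx
  have cpow_isBigO :
      (fun s => (x : ℂ) ^ (s - 1)) =O[𝓟 {s | σ ≤ s.re ∧ s.re ≤ b}] growthWeight 0 :=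
    cpow_isBigO_growthWeight_zero (B := b - 1) hx fun s hs => sub_le_sub_right hs.2 1
  rw [← integral_vertical_eq_of_differentiableOn
    (f := fun s => regularizedKernel G s * (x : ℂ) ^ (s - 1)) hσb (by linarith)
    ((differentiableOn_regularizedKernel hσ hb hG).fun_mul (DifferentiableOn.const_cpow
      (by fun_prop) (.inl (ofReal_ne_zero.2 x_pos.ne'))))
    (isBigO_growthWeight_mul (regularizedKernel_isBigO hσ hb hp hG hO) cpow_isBigO
      (add_zero _).le)]
  obtain ⟨pole_integrable, pole_integral⟩ :=
    integral_pole_mul_cpow_eq_zero hx hσ (G 1) (deriv G 1)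
  have main_integrable := integrable_mul_cpow_div_sq (c := 1) (g := fun y => G (σ + y * I))
    x_pos hσ.ne (hG.continuousOn.comp_continuous (by fun_prop) (by simp))
    (integrable_vertical_div_sq_add_sq hσ hp' hG.continuousOn hO)
  rw [ofReal_one] at main_integrable
  rw [← sub_zero (∫ y : ℝ, _ / _), ← pole_integral, ← integral_sub main_integrable pole_integrable]
  congr 1 with y
  rw [regularizedKernel_eq (mod_cast vertical_ne hσ.ne y)
    (mod_cast vertical_ne (hσ.trans one_lt_two).ne y)]
  simp only [div_eq_mul_inv, sq, mul_inv]
  ring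

end RegularizedKernel

/-! ### Mellin transforms -/

theorem integrable_of_hasSum_of_summable_integral_norm {α ι E : Type*}
    [Countable ι] [NormedAddCommGroup E] [MeasurableSpace α] {μ : Measure α}
    {f : ι → α → E} {F : α → E}
    (hf : ∀ i, Integrable (f i) μ) (hs : Summable fun i => ∫ a, ‖f i a‖ ∂μ)
    (hF : ∀ᵐ a ∂μ, HasSum (fun i => f i a) (F a)) : Integrable F μ := by
  refine ⟨aestronglyMeasurable_of_tendsto_ae (u := atTop)
    (f := fun (t : Finset ι) a => ∑ i ∈ t, f i a)
    (fun t => Finset.aestronglyMeasurable_fun_sum _ fun i _ => (hf i).1) hF, ?_⟩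
  calc ∫⁻ a, ‖F a‖ₑ ∂μ
      ≤ ∫⁻ a, ∑' i, ‖f i a‖ₑ ∂μ := lintegral_mono_ae <| hF.mono fun a ha =>
        ha.tsum_eq ▸ enorm_tsum_le_tsum_enorm
    _ = ∑' i, ∫⁻ a, ‖f i a‖ₑ ∂μ := lintegral_tsum fun i => (hf i).1.enorm
    _ = ∑' i, ENNReal.ofReal (∫ a, ‖f i a‖ ∂μ) :=
        tsum_congr fun i => (ofReal_integral_norm_eq_lintegral_enorm (hf i)).symm
    _ < ⊤ := hs.tsum_ofReal_ne_top.lt_top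

section Mellin

variable {E : Type*} [NormedAddCommGroup E] [NormedSpace ℂ E]

theorem hasMellin_congr_ae {f g : ℝ → E} {s : ℂ} {m : E} (h : HasMellin f s m)
    (hfg : f =ᵐ[volume.restrict (Set.Ioi 0)] g) : HasMellin g s m := by
  have smul_congr : (fun u : ℝ => (u : ℂ) ^ (s - 1) • f u)
      =ᵐ[volume.restrict (Set.Ioi 0)] fun u : ℝ => (u : ℂ) ^ (s - 1) • g u := by
    filter_upwards [hfg] with u hu
    rw [hu]
  exact ⟨h.1.congr smul_congr, (integral_congr_ae smul_congr).symm.trans h.2⟩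

theorem hasMellin_congr {f g : ℝ → E} {s : ℂ} {m : E} (h : HasMellin f s m)
    (hfg : ∀ u, 0 < u → f u = g u) : HasMellin g s m :=
  hasMellin_congr_ae h <| (ae_restrict_mem measurableSet_Ioi).mono hfg

theorem hasMellin_fun_add {f g : ℝ → E} {s : ℂ} {m n : E} (hf : HasMellin f s m)
    (hg : HasMellin g s n) : HasMellin (fun u => f u + g u) s (m + n) := by
  simpa only [hf.2, hg.2] using hasMellin_add hf.1 hg.1

theorem hasMellin_fun_sub {f g : ℝ → E} {s : ℂ} {m n : E} (hf : HasMellin f s m)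
    (hg : HasMellin g s n) : HasMellin (fun u => f u - g u) s (m - n) := by
  simpa only [hf.2, hg.2] using hasMellin_sub hf.1 hg.1

theorem hasMellin_fun_const_smul {f : ℝ → E} {s : ℂ} {m : E} (c : ℂ) (hf : HasMellin f s m) :
    HasMellin (fun u => c • f u) s (c • m) := by
  simpa only [hf.2] using hasMellin_const_smul hf.1 c

theorem hasMellin_comp_inv {f : ℝ → E} {s : ℂ} {m : E} (hf : HasMellin f (-s) m) :
    HasMellin (fun u => f u⁻¹) s m := by
  refine ⟨?_, (mellin_comp_inv f s).trans hf.2⟩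
  simpa only [Real.rpow_neg_one] using
    (MellinConvergent.comp_rpow (f := f) (s := s) (neg_ne_zero.2 one_ne_zero)).2
      (by simpa only [ofReal_neg, ofReal_one, div_neg, div_one] using hf.1)

theorem hasMellin_of_hasSum {ι : Type*} [Countable ι] {f : ι → ℝ → E} {F : ℝ → E} {m : ι → E}
    {s : ℂ} {M : E} (hf : ∀ i, HasMellin (f i) s (m i))
    (hF : ∀ u, 0 < u → HasSum (fun i => f i u) (F u))
    (hs : Summable fun i => ∫ u in Set.Ioi (0 : ℝ), ‖(u : ℂ) ^ (s - 1) • f i u‖)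
    (hM : HasSum m M) : HasMellin F s M := by
  have hasSum_integrand : ∀ᵐ u : ℝ ∂volume.restrict (Set.Ioi 0),
      HasSum (fun i => (u : ℂ) ^ (s - 1) • f i u) ((u : ℂ) ^ (s - 1) • F u) :=
    (ae_restrict_mem measurableSet_Ioi).mono fun u hu => (hF u hu).const_smul _
  have hasSum_mellin := hasSum_integral_of_summable_integral_norm (fun i => (hf i).1) hs
  rw [integral_congr_ae (hasSum_integrand.mono fun u hu => hu.tsum_eq)] at hasSum_mellin
  refine ⟨integrable_of_hasSum_of_summable_integral_norm (fun i => (hf i).1) hs hasSum_integrand,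
    hasSum_mellin.unique ?_⟩
  exact hM.congr_fun fun i => (hf i).2

theorem hasMellin_of_hasSum_of_nonneg {ι : Type*} [Countable ι] {f : ι → ℝ → ℝ} {F : ℝ → ℝ}
    {m m' : ι → ℂ} {s M : ℂ} (hf : ∀ i, HasMellin (fun u => (f i u : ℂ)) s (m i))
    (hf' : ∀ i, HasMellin (fun u => (f i u : ℂ)) s.re (m' i))
    (hpos : ∀ i u, 0 < u → 0 ≤ f i u) (hF : ∀ u, 0 < u → HasSum (fun i => f i u) (F u))
    (hm' : Summable m') (hM : HasSum m M) : HasMellin (fun u => (F u : ℂ)) s M := by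
  refine hasMellin_of_hasSum hf (fun u hu => hasSum_ofReal.2 (hF u hu)) ?_ hM
  refine summable_ofReal.1 (hm'.congr fun i => ?_)
  rw [← integral_complex_ofReal, ← (hf' i).2, mellin]
  refine setIntegral_congr_fun measurableSet_Ioi fun u hu => ?_
  have hu : 0 < u := hu
  simp only [smul_eq_mul, norm_mul, norm_cpow_eq_rpow_re_of_pos hu, norm_real,
    Real.norm_of_nonneg (hpos i u hu), sub_re, one_re, ofReal_mul, ofReal_cpow hu.le, ofReal_sub,
    ofReal_one]

theorem hasMellin_log_smul {f : ℝ → E} {F : ℂ → E} {F' : E} {s : ℂ}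
    (hf : ∀ z : ℂ, 0 < z.re → HasMellin f z (F z)) (htop : ∀ u, 1 < u → f u = 0)
    (hzero : ∀ b : ℝ, 0 < b → f =O[𝓝[>] 0] (fun u : ℝ => u ^ (-b))) (hs : 0 < s.re)
    (hF : HasDerivAt F F' s) : HasMellin (fun u => Real.log u • f u) s F' := by
  have locallyIntegrableOn : LocallyIntegrableOn f (Set.Ioi 0) := by
    have convergent := (hf 1 (by simp)).1
    simp only [MellinConvergent, sub_self, cpow_zero, one_smul] at convergent
    exact convergent.locallyIntegrableOn
  have isBigO_top : f =O[atTop] (fun u : ℝ => u ^ (-(s.re + 1))) :=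
    (isBigO_zero _ _).congr' ((eventually_gt_atTop 1).mono fun u hu => (htop u hu).symm) .rfl
  obtain ⟨convergent, hasDerivAt⟩ := mellin_hasDerivAt_of_isBigO_rpow locallyIntegrableOn
    isBigO_top (lt_add_one _) (hzero (s.re / 2) (half_pos hs)) (half_lt_self hs)
  refine ⟨convergent, hasDerivAt.unique (hF.congr_of_eventuallyEq ?_)⟩
  filter_upwards [(isOpen_lt continuous_const continuous_re).mem_nhds hs] with z hz
  exact (hf z hz).2

end Mellin

theorem indicator_neg_log_pow_isBigO_rpow_neg (k : ℕ) {b : ℝ} (hb : 0 < b) :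
    (Set.indicator (Set.Ioc 0 1) fun u : ℝ => ((-Real.log u) ^ k : ℂ))
      =O[𝓝[>] 0] (fun u : ℝ => u ^ (-b)) := by
  refine .trans (.of_norm_le fun u => ?_)
    (isLittleO_abs_log_rpow_rpow_nhdsGT_zero k (neg_lt_zero.2 hb)).isBigO
  refine (norm_indicator_le_norm_self _ _).trans_eq ?_
  rw [norm_pow, norm_neg, norm_real, Real.norm_eq_abs, Real.rpow_natCast]

theorem hasMellin_indicator_neg_log_pow (k : ℕ) {s : ℂ} (hs : 0 < s.re) :
    HasMellin (Set.indicator (Set.Ioc 0 1) fun u : ℝ => ((-Real.log u) ^ k : ℂ)) s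
      (k.factorial / s ^ (k + 1)) := by
  induction k generalizing s with
  | zero => simpa using hasMellin_one_Ioc hs
  | succ k ih =>
    have ne_zero : s ≠ 0 := ne_zero_of_re_pos hs
    have hasDerivAt : HasDerivAt (fun z : ℂ => (k.factorial / z ^ (k + 1) : ℂ))
        (-((k + 1).factorial / s ^ (k + 1 + 1))) s := by
      refine ((hasDerivAt_const s (k.factorial : ℂ)).fun_div (hasDerivAt_pow (k + 1) s)
        (pow_ne_zero _ ne_zero)).congr_deriv ?_
      rw [Nat.factorial_succ]
      push_cast
      field_simp
      ring_nf
    have hasMellin := hasMellin_log_smul (fun z hz => ih hz)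
      (fun u hu => Set.indicator_of_notMem (fun hmem => hu.not_ge hmem.2) _)
      (fun b hb => indicator_neg_log_pow_isBigO_rpow_neg k hb) hs hasDerivAt
    convert hasMellin_fun_const_smul (-1) hasMellin using 1
    · ext u
      by_cases hu : u ∈ Set.Ioc (0 : ℝ) 1
      · simp only [Set.indicator_of_mem hu, real_smul, smul_eq_mul]
        ring
      · simp only [Set.indicator_of_notMem hu, smul_zero]
    · simp

theorem hasMellin_posLog_inv_pow {k : ℕ} (hk : k ≠ 0) {s : ℂ} (hs : 0 < s.re) :
    HasMellin (fun u => (Real.posLog u⁻¹ : ℂ) ^ k) s (k.factorial / s ^ (k + 1)) := by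
  refine hasMellin_congr (hasMellin_indicator_neg_log_pow k hs) fun u hu => ?_
  rw [Real.posLog_apply, Real.log_inv]
  rcases le_or_gt u 1 with hu_le | hu_gt
  · rw [Set.indicator_of_mem (show u ∈ Set.Ioc (0 : ℝ) 1 from ⟨hu, hu_le⟩),
      max_eq_right (neg_nonneg.2 (Real.log_nonpos hu.le hu_le)), ofReal_neg]
  · rw [Set.indicator_of_notMem fun hmem => hu_gt.not_ge hmem.2,
      max_eq_left (neg_nonpos.2 (Real.log_nonneg hu_gt.le)), ofReal_zero, zero_pow hk]

theorem hasMellin_one_sub_min_pow (a : ℕ) {s : ℂ} (hs : 0 < s.re) :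
    HasMellin (fun u : ℝ => 1 - ((min u 1 : ℝ) : ℂ) ^ a) s (1 / s - 1 / (s + a)) := by
  have hasMellin_pow := hasMellin_cpow_Ioc (a : ℂ) (s := s) (by simpa using by positivity)
  refine hasMellin_congr (hasMellin_fun_sub (hasMellin_one_Ioc hs) hasMellin_pow) fun u hu => ?_
  rcases le_or_gt u 1 with hu_le | hu_gt
  · have hmem : u ∈ Set.Ioc (0 : ℝ) 1 := ⟨hu, hu_le⟩
    rw [Set.indicator_of_mem hmem, Set.indicator_of_mem hmem, min_eq_left hu_le, cpow_natCast]
  · have hmem : u ∉ Set.Ioc (0 : ℝ) 1 := fun hmem => hu_gt.not_ge hmem.2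
    rw [Set.indicator_of_notMem hmem, Set.indicator_of_notMem hmem, min_eq_right hu_gt.le]
    simp

theorem hasMellin_min_one_inv {s : ℂ} (hs : 0 < s.re) (hs1 : s.re < 1) :
    HasMellin (fun u : ℝ => ((min 1 u⁻¹ : ℝ) : ℂ)) s (1 / (s * (1 - s))) := by
  have ne_zero : s ≠ 0 := ne_zero_of_re_pos hs
  have one_sub_ne_zero : 1 - s ≠ 0 := sub_ne_zero.2 fun h => by simp [← h] at hs1
  have hasMellin_inv := hasMellin_comp_inv (s := s) (hasMellin_cpow_Ioc 1 (by simpa using hs1))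
  convert hasMellin_congr_ae (hasMellin_fun_add (hasMellin_one_Ioc hs) hasMellin_inv)
    (g := fun u : ℝ => ((min 1 u⁻¹ : ℝ) : ℂ)) ?_ using 1
  · rw [neg_add_eq_sub]
    field_simp
    ring
  filter_upwards [ae_restrict_mem measurableSet_Ioi, compl_mem_ae_iff.2 (measure_singleton 1)]
    with u hu hu_ne
  rcases lt_or_gt_of_ne (show u ≠ 1 from hu_ne) with hu_lt | hu_gt
  · have one_lt_inv := (one_lt_inv₀ hu).2 hu_lt
    rw [Set.indicator_of_mem (show u ∈ Set.Ioc (0 : ℝ) 1 from ⟨hu, hu_lt.le⟩),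
      Set.indicator_of_notMem fun hmem => one_lt_inv.not_ge hmem.2, min_eq_left one_lt_inv.le]
    simp
  · have inv_le_one := inv_le_one_of_one_le₀ hu_gt.le
    rw [Set.indicator_of_notMem fun hmem => hu_gt.not_ge hmem.2,
      Set.indicator_of_mem (show u⁻¹ ∈ Set.Ioc (0 : ℝ) 1 from ⟨inv_pos.2 hu, inv_le_one⟩),
      min_eq_right inv_le_one]
    simp

/-- The logarithmically weighted summatory function `∑_{n ≤ x} a n log (x / n)`, that is
`∫₁ˣ (∑_{n ≤ t} a n) dt / t`. -/
noncomputable def logSum (a : ℕ → ℝ) (x : ℝ) : ℝ :=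
  ∑ n ∈ Finset.Icc 1 ⌊x⌋₊, a n * Real.log (x / n)

section LogSum

variable {a : ℕ → ℝ} {x : ℝ}

theorem posLog_div_natCast_of_notMem_Icc (hx : 0 < x) {n : ℕ} (hn : n ∉ Finset.Icc 1 ⌊x⌋₊) :
    Real.posLog (x / n) = 0 := by
  rcases n.eq_zero_or_pos with rfl | n_pos
  · simp
  have lt_natCast : x < n :=
    (Nat.floor_lt hx.le).1 (not_le.1 fun hle => hn (Finset.mem_Icc.2 ⟨n_pos, hle⟩))
  have natCast_pos : (0 : ℝ) < n := hx.trans lt_natCast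
  rw [Real.posLog_eq_zero_iff, abs_of_pos (by positivity)]
  exact ((div_lt_one natCast_pos).2 lt_natCast).le

theorem posLog_div_natCast_of_mem_Icc (hx : 0 < x) {n : ℕ} (hn : n ∈ Finset.Icc 1 ⌊x⌋₊) :
    Real.posLog (x / n) = Real.log (x / n) := by
  obtain ⟨n_pos, n_le⟩ := Finset.mem_Icc.1 hn
  have natCast_pos : (0 : ℝ) < n := mod_cast n_pos
  rw [Real.posLog_eq_log]
  rw [abs_of_pos (by positivity)]
  exact (one_le_div natCast_pos).2 ((Nat.le_floor_iff hx.le).1 n_le)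

theorem logSum_eq_sum_posLog (a : ℕ → ℝ) (hx : 0 < x) {N : ℕ} (hN : ⌊x⌋₊ ≤ N) :
    logSum a x = ∑ n ∈ Finset.Icc 1 N, a n * Real.posLog (x / n) := by
  rw [logSum, ← Finset.sum_subset (Finset.Icc_subset_Icc_right hN)]
  · exact Finset.sum_congr rfl fun n hn => by rw [posLog_div_natCast_of_mem_Icc hx hn]
  · intro n _ hn
    rw [posLog_div_natCast_of_notMem_Icc hx hn, mul_zero]

theorem hasSum_logSum (a : ℕ → ℝ) (hx : 0 < x) :
    HasSum (fun n : ℕ => a n * Real.posLog (x / n)) (logSum a x) := by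
  rw [logSum_eq_sum_posLog a hx le_rfl]
  exact hasSum_sum_of_ne_finset_zero fun n hn => by
    rw [posLog_div_natCast_of_notMem_Icc hx hn, mul_zero]

theorem continuousOn_logSum (a : ℕ → ℝ) : ContinuousOn (logSum a) (Set.Ioi 0) := fun x hx => by
  have eventuallyEq_sum : (fun y => ∑ n ∈ Finset.Icc 1 ⌊x + 1⌋₊, a n * Real.posLog (y / n))
      =ᶠ[𝓝 x] logSum a := by
    filter_upwards [Ioo_mem_nhds hx.out (lt_add_one x)] with y hy
    exact (logSum_eq_sum_posLog a hy.1 (Nat.floor_mono hy.2.le)).symm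
  refine (ContinuousAt.congr (Continuous.continuousAt ?_) eventuallyEq_sum).continuousWithinAt
  exact continuous_finsetSum _ fun n _ =>
    continuous_const.mul (Real.continuous_posLog.comp (continuous_id.div_const _))

theorem hasMellin_posLog_inv_div_natCast {n : ℕ} (hn : n ≠ 0) {s : ℂ} (hs : 0 < s.re) :
    HasMellin (fun u => (Real.posLog (u⁻¹ / n) : ℂ)) s (((n : ℂ) ^ s)⁻¹ / s ^ 2) := by
  have natCast_pos : (0 : ℝ) < n := mod_cast hn.bot_lt
  have hasMellin_posLog := hasMellin_posLog_inv_pow one_ne_zero hs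
  simp only [pow_one] at hasMellin_posLog
  simp only [fun u : ℝ => show u⁻¹ / n = (n * u)⁻¹ by rw [mul_inv, mul_comm, div_eq_mul_inv]]
  refine ⟨(MellinConvergent.comp_mul_left natCast_pos).2 hasMellin_posLog.1, ?_⟩
  rw [mellin_comp_mul_left (fun u => (Real.posLog u⁻¹ : ℂ)) s natCast_pos, hasMellin_posLog.2]
  simp only [smul_eq_mul, cpow_neg, ofReal_natCast, Nat.factorial_one, Nat.cast_one,
    div_eq_mul_inv, one_mul, Nat.reduceAdd]

theorem hasMellin_logSum (ha : ∀ n, 0 ≤ a n) {s : ℂ} (hs : 0 < s.re)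
    (hL : LSeriesSummable ↗a s) :
    HasMellin (fun u => (logSum a u⁻¹ : ℂ)) s (L ↗a s / s ^ 2) := by
  have hL' : LSeriesSummable ↗a s.re := hL.of_re_le_re (ofReal_re _).ge
  have hasMellin_term (z : ℂ) (hz : 0 < z.re) (n : ℕ) :
      HasMellin (fun u => ((a n * Real.posLog (u⁻¹ / n) : ℝ) : ℂ)) z
        (LSeries.term ↗a z n / z ^ 2) := by
    rcases eq_or_ne n 0 with rfl | hn
    · simp [HasMellin, MellinConvergent, mellin]
    · convert hasMellin_fun_const_smul (a n : ℂ) (hasMellin_posLog_inv_div_natCast hn hz) using 1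
      · simp only [ofReal_mul, smul_eq_mul]
      · rw [LSeries.term_of_ne_zero hn, smul_eq_mul]
        ring
  exact hasMellin_of_hasSum_of_nonneg (hasMellin_term s hs) (hasMellin_term s.re hs)
    (fun n u _ => mul_nonneg (ha n) Real.posLog_nonneg)
    (fun u hu => hasSum_logSum a (inv_pos.2 hu)) (hL'.div_const _) (hL.hasSum.div_const _)

end LogSum

theorem term_div_natCast (f : ℕ → ℂ) (s : ℂ) :
    LSeries.term (fun n => f n / n) s = LSeries.term f (1 + s) := by
  ext n
  rcases eq_or_ne n 0 with rfl | hn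
  · simp
  · rw [LSeries.term_of_ne_zero hn, LSeries.term_of_ne_zero hn,
      cpow_add _ _ (Nat.cast_ne_zero.2 hn), cpow_one, div_div]

theorem hasMellin_vonMangoldt_logSum {s : ℂ} (hs : 0 < s.re) :
    HasMellin (fun u => (logSum (fun n => Λ n / n) u⁻¹ : ℂ)) s (L ↗Λ (1 + s) / s ^ 2) := by
  have summable : LSeriesSummable (fun n => ((Λ n / n : ℝ) : ℂ)) s := by
    simpa only [LSeriesSummable, ofReal_div, ofReal_natCast, term_div_natCast] using
      ArithmeticFunction.LSeriesSummable_vonMangoldt (s := 1 + s) (by simpa using hs)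
  have nonneg (n : ℕ) : 0 ≤ Λ n / (n : ℝ) :=
    div_nonneg ArithmeticFunction.vonMangoldt_nonneg n.cast_nonneg
  simpa only [LSeries, ofReal_div, ofReal_natCast, term_div_natCast] using
    hasMellin_logSum nonneg hs summable

theorem hasSum_digamma_sub_digamma {v w : ℂ} (hv : 0 < v.re) (hw : 0 < w.re) :
    HasSum (fun n : ℕ => ((n : ℂ) + 1 + v)⁻¹ - (n + 1 + w)⁻¹)
      (digamma (w + 1) - digamma (v + 1)) := by
  rw [← sub_sub_sub_cancel_right _ _ (digamma 1)]
  exact ((hasSum_digammaTerm hw).sub (hasSum_digammaTerm hv)).congr_fun fun n =>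
    (sub_sub_sub_cancel_left _ _ _).symm

theorem hasSum_digamma_half_sub {w : ℂ} (hw : 0 < w.re) :
    HasSum (fun k : ℕ => 1 / ((2 * k + 3 : ℕ) : ℂ) - 1 / (w + (2 * k + 3 : ℕ)))
      ((digamma ((1 + w) / 2 + 1) - digamma (1 / 2 + 1)) / 2) := by
  refine ((hasSum_digamma_sub_digamma (v := 1 / 2) (w := (1 + w) / 2) (by norm_num)
    (by simp; linarith)).div_const 2).congr_fun fun k => ?_
  rw [show (k : ℂ) + 1 + 1 / 2 = ((2 * k + 3 : ℕ) : ℂ) / 2 by push_cast; ring,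
    show (k : ℂ) + 1 + (1 + w) / 2 = (w + (2 * k + 3 : ℕ)) / 2 by push_cast; ring,
    inv_div, inv_div]
  ring

theorem logDeriv_entireXi_one_add_sub {w : ℂ} (hw : 0 < w.re) :
    logDeriv entireXi (1 + w) - logDeriv entireXi 1 = 1 / w - L ↗Λ (1 + w)
      - Real.eulerMascheroniConstant
      + (digamma ((1 + w) / 2 + 1) - digamma (1 / 2 + 1)) / 2 := by
  rw [logDeriv_entireXi_of_one_lt_re (by simpa using hw), logDeriv_entireXi_one,
    digamma_apply_add_one _ (ne_neg_natCast_of_re_pos (s := 1 / 2) (by norm_num)),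
    digamma_one_half, add_sub_cancel_left,
    show Real.log (4 * Real.pi) = 2 * Real.log 2 + Real.log Real.pi by
      rw [show (4 : ℝ) = 2 ^ 2 by norm_num, Real.log_mul (by norm_num) Real.pi_pos.ne',
        Real.log_pow, Nat.cast_ofNat]]
  push_cast [ofReal_log zero_le_two]
  ring

/-- The contribution `∑_k (1 - min u 1 ^ (2 k + 3)) / (2 k + 3) ^ 2` of the trivial zeros of `ζ` to
`xiMellin`; the zero `-2 (k + 1)` lies at distance `2 k + 3` from `1`. -/
noncomputable def trivialZeroSum (u : ℝ) : ℝ :=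
  ∑' k : ℕ, (1 - min u 1 ^ (2 * k + 3)) / ((2 * k + 3 : ℕ) : ℝ) ^ 2

theorem summable_one_div_odd_sq : Summable fun k : ℕ => 1 / ((2 * k + 3 : ℕ) : ℝ) ^ 2 :=
  (Real.summable_one_div_nat_pow.2 one_lt_two).comp_injective (i := fun k : ℕ => 2 * k + 3)
    fun a b hab => by simpa using hab

theorem min_one_pow_mem_Icc {u : ℝ} (hu : 0 ≤ u) (n : ℕ) : min u 1 ^ n ∈ Set.Icc (0 : ℝ) 1 :=
  have min_nonneg : 0 ≤ min u 1 := le_min hu zero_le_one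
  ⟨pow_nonneg min_nonneg n, pow_le_one₀ min_nonneg (min_le_right u 1)⟩

theorem norm_one_sub_min_pow_div_le {u : ℝ} (hu : 0 ≤ u) (k : ℕ) :
    ‖(1 - min u 1 ^ (2 * k + 3)) / ((2 * k + 3 : ℕ) : ℝ) ^ 2‖ ≤
      1 / ((2 * k + 3 : ℕ) : ℝ) ^ 2 := by
  obtain ⟨pow_nonneg, pow_le_one⟩ := min_one_pow_mem_Icc hu (2 * k + 3)
  rw [norm_div, Real.norm_of_nonneg (sub_nonneg.2 pow_le_one), Real.norm_of_nonneg (sq_nonneg _)]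
  gcongr
  exact sub_le_self 1 pow_nonneg

theorem hasSum_trivialZeroSum {u : ℝ} (hu : 0 ≤ u) :
    HasSum (fun k : ℕ => (1 - min u 1 ^ (2 * k + 3)) / ((2 * k + 3 : ℕ) : ℝ) ^ 2)
      (trivialZeroSum u) :=
  (summable_one_div_odd_sq.of_norm_bounded (norm_one_sub_min_pow_div_le hu)).hasSum

theorem continuousOn_trivialZeroSum : ContinuousOn trivialZeroSum (Set.Ici 0) :=
  continuousOn_tsum (fun k => by fun_prop) summable_one_div_odd_sq
    fun k u hu => norm_one_sub_min_pow_div_le hu k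

theorem hasMellin_trivialZeroSum {s : ℂ} (hs : 0 < s.re) :
    HasMellin (fun u => (trivialZeroSum u : ℂ)) s
      ((digamma ((1 + s) / 2 + 1) - digamma (1 / 2 + 1)) / 2 / s ^ 2) := by
  have hasMellin_term (z : ℂ) (hz : 0 < z.re) (k : ℕ) :
      HasMellin (fun u : ℝ => (((1 - min u 1 ^ (2 * k + 3)) / ((2 * k + 3 : ℕ) : ℝ) ^ 2 : ℝ) : ℂ)) z
        ((1 / ((2 * k + 3 : ℕ) : ℂ) - 1 / (z + (2 * k + 3 : ℕ))) / z ^ 2) := by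
    have ne_zero : z ≠ 0 := ne_zero_of_re_pos hz
    have odd_ne_zero : ((2 * k + 3 : ℕ) : ℂ) ≠ 0 := Nat.cast_ne_zero.2 (by lia)
    have add_odd_ne_zero : z + (2 * k + 3 : ℕ) ≠ 0 :=
      ne_zero_of_re_pos (by rw [add_re, natCast_re]; positivity)
    convert hasMellin_fun_const_smul (1 / ((2 * k + 3 : ℕ) : ℂ) ^ 2)
      (hasMellin_one_sub_min_pow (2 * k + 3) hz) using 1
    · ext u
      push_cast
      rw [smul_eq_mul]
      ring
    · generalize ((2 * k + 3 : ℕ) : ℂ) = b at *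
      rw [smul_eq_mul]
      field_simp
      ring
  exact hasMellin_of_hasSum_of_nonneg (hasMellin_term s hs) (hasMellin_term s.re hs)
    (fun k u hu => div_nonneg (sub_nonneg.2 (min_one_pow_mem_Icc hu.le _).2) (sq_nonneg _))
    (fun u hu => hasSum_trivialZeroSum hu.le)
    ((hasSum_digamma_half_sub (w := s.re) hs).summable.div_const _)
    ((hasSum_digamma_half_sub hs).div_const _)

/-- The function whose Mellin transform at `w` is
`regularizedKernel (logDeriv entireXi) (1 + w)` for `0 < re w < 1`. -/
noncomputable def xiMellin (u : ℝ) : ℂ :=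
  -(logSum (fun n => Λ n / n) u⁻¹ : ℂ) + 1 / 2 * (Real.posLog u⁻¹ : ℂ) ^ 2
    - Real.eulerMascheroniConstant * (Real.posLog u⁻¹ : ℂ) + (trivialZeroSum u : ℂ)
    - deriv (logDeriv entireXi) 1 * ((min 1 u⁻¹ : ℝ) : ℂ)

theorem hasMellin_xiMellin {w : ℂ} (hw : 0 < w.re) (hw1 : w.re < 1) :
    HasMellin xiMellin w (regularizedKernel (logDeriv entireXi) (1 + w)) := by
  have ne_zero : w ≠ 0 := ne_zero_of_re_pos hw
  have ne_one : w ≠ 1 := by rintro rfl; simp at hw1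
  have hasMellin_posLog := hasMellin_posLog_inv_pow one_ne_zero hw
  simp only [pow_one] at hasMellin_posLog
  convert hasMellin_fun_sub (hasMellin_fun_add (hasMellin_fun_sub (hasMellin_fun_add
    (hasMellin_fun_const_smul (-1) (hasMellin_vonMangoldt_logSum hw))
    (hasMellin_fun_const_smul (1 / 2) (hasMellin_posLog_inv_pow two_ne_zero hw)))
    (hasMellin_fun_const_smul Real.eulerMascheroniConstant hasMellin_posLog))
    (hasMellin_trivialZeroSum hw))
    (hasMellin_fun_const_smul (deriv (logDeriv entireXi) 1) (hasMellin_min_one_inv hw hw1)) using 1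
  · ext u
    rw [xiMellin]
    simp only [smul_eq_mul]
    ring
  · have one_sub_ne_zero : 1 - w ≠ 0 := sub_ne_zero.2 ne_one.symm
    rw [regularizedKernel_eq (by simpa using ne_zero)
      (fun h => ne_one (by linear_combination h)), logDeriv_entireXi_one_add_sub hw,
      add_sub_cancel_left, show 1 + w - 2 = -(1 - w) by ring]
    simp only [smul_eq_mul, Nat.factorial_two, Nat.factorial_one, Nat.cast_ofNat, Nat.cast_one]
    field_simp
    ring

theorem continuousAt_xiMellin {u : ℝ} (hu : 0 < u) : ContinuousAt xiMellin u := by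
  have continuousAt_inv : ContinuousAt (fun u : ℝ => u⁻¹) u := continuousAt_inv₀ hu.ne'
  have continuousAt_logSum : ContinuousAt (fun u => logSum (fun n => Λ n / n) u⁻¹) u :=
    ContinuousAt.comp' (f := fun u : ℝ => u⁻¹) ((continuousOn_logSum _).continuousAt
      (Ioi_mem_nhds (inv_pos.2 hu))) continuousAt_inv
  have continuousAt_posLog : ContinuousAt (fun u : ℝ => Real.posLog u⁻¹) u :=
    ContinuousAt.comp' (f := fun u : ℝ => u⁻¹) Real.continuous_posLog.continuousAt continuousAt_inv
  have continuousAt_trivialZeroSum := continuousOn_trivialZeroSum.continuousAt (Ici_mem_nhds hu)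
  unfold xiMellin
  fun_prop (disch := exact hu.ne')

theorem xiMellin_inv_eq_integral (hRH : RiemannHypothesis) {x : ℝ} (hx : 0 < x) :
    xiMellin x⁻¹ = (1 / (2 * Real.pi) : ℝ) • ∫ y : ℝ,
      regularizedKernel (logDeriv entireXi) ((3 / 2 : ℝ) + y * I) *
        (x : ℂ) ^ ((3 / 2 : ℝ) + y * I - 1 : ℂ) := by
  have half_re (y : ℝ) : ((1 / 2 : ℝ) + y * I : ℂ).re = 1 / 2 := by simp
  have hasMellin (y : ℝ) := hasMellin_xiMellin (w := (1 / 2 : ℝ) + y * I)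
    (by rw [half_re]; norm_num) (by rw [half_re]; norm_num)
  have one_add_half (y : ℝ) : 1 + (((1 / 2 : ℝ) : ℂ) + y * I) = (3 / 2 : ℝ) + y * I := by
    push_cast
    ring
  have verticalIntegrable : VerticalIntegrable (mellin xiMellin) (1 / 2) :=
    (integrable_regularizedKernel (σ := 3 / 4) (b := 3 / 2) (by norm_num) (by norm_num)
      (by norm_num) one_half_pos.le one_half_lt_one
      ((differentiableOn_logDeriv_entireXi hRH).mono fun s hs =>
        lt_of_lt_of_le (by norm_num) hs.out)
      (logDeriv_entireXi_isBigO_of_RH hRH (by norm_num))).congr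
      (.of_forall fun y => ((hasMellin y).2.trans (by rw [one_add_half])).symm)
  rw [← mellinInv_mellin_eq (1 / 2) xiMellin (inv_pos.2 hx) (by simpa using (hasMellin 0).1)
    verticalIntegrable (continuousAt_xiMellin (inv_pos.2 hx)), mellinInv]
  congr 2 with y
  rw [(hasMellin y).2, one_add_half, smul_eq_mul, mul_comm, ← one_add_half, add_sub_cancel_left,
    ofReal_inv, inv_cpow _ _ (by rw [arg_ofReal_of_nonneg hx.le]; exact Real.pi_pos.ne), cpow_neg,
    inv_inv]

theorem norm_xiMellin_inv_le_of_lt (hRH : RiemannHypothesis) {x σ : ℝ} (hx : 1 ≤ x)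
    (hσ : 1 / 2 < σ) (hσ1 : σ < 1) :
    ‖xiMellin x⁻¹‖ ≤ (logDeriv entireXi 1).re * x ^ (σ - 1) / (1 - σ) := by
  have differentiableOn : DifferentiableOn ℂ (logDeriv entireXi) {s | σ ≤ s.re} :=
    (differentiableOn_logDeriv_entireXi hRH).mono fun s hs => hσ.trans_le hs.out
  have isBigO := logDeriv_entireXi_isBigO_of_RH hRH hσ
  have norm_integral_le := norm_integral_mul_cpow_div_sq_le hx hσ1 one_half_lt_one
    differentiableOn isBigO fun y => re_logDeriv_entireXi_nonneg hRH (by simpa using hσ)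
  rw [ofReal_one] at norm_integral_le
  rw [xiMellin_inv_eq_integral hRH (one_pos.trans_le hx), integral_regularizedKernel_mul_cpow hx
    hσ1 (by linarith) (by norm_num) one_half_pos.le one_half_lt_one differentiableOn isBigO,
    norm_smul, Real.norm_of_nonneg (by positivity)]
  refine (mul_le_mul_of_nonneg_left norm_integral_le (by positivity)).trans_eq ?_
  field_simp [(sub_pos.2 hσ1).ne']

theorem norm_xiMellin_inv_le (hRH : RiemannHypothesis) {x : ℝ} (hx : 1 ≤ x) :
    ‖xiMellin x⁻¹‖ ≤ (2 + Real.eulerMascheroniConstant - Real.log (4 * Real.pi)) / √x := by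
  have x_pos : 0 < x := one_pos.trans_le hx
  have tendsto_bound : Tendsto
      (fun σ : ℝ => (logDeriv entireXi 1).re * x ^ (σ - 1) / (1 - σ)) (𝓝[>] (1 / 2))
      (𝓝 ((logDeriv entireXi 1).re * x ^ (1 / 2 - 1 : ℝ) / (1 - 1 / 2))) := by
    refine ((continuousAt_const.mul (continuousAt_const.rpow (by fun_prop) (.inl x_pos.ne'))).div
      (by fun_prop) ?_).tendsto.mono_left nhdsWithin_le_nhds
    norm_num
  refine (ge_of_tendsto tendsto_bound ?_).trans_eq ?_
  · filter_upwards [Ioo_mem_nhdsGT one_half_lt_one] with σ hσ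
    exact norm_xiMellin_inv_le_of_lt hRH hx hσ.1 hσ.2
  · rw [logDeriv_entireXi_one, ofReal_re, show (1 / 2 - 1 : ℝ) = -(1 / 2) by norm_num,
      Real.rpow_neg x_pos.le, ← Real.sqrt_eq_rpow]
    ring

/-! ### The primitive of `R(t) / t` -/

theorem trivialZeroSum_zero_le : trivialZeroSum 0 ≤ 1 / 4 := by
  rw [trivialZeroSum]
  refine Real.tsum_le_of_sum_range_le (fun k => ?_) fun n => ?_
  · exact div_nonneg (sub_nonneg.2 (min_one_pow_mem_Icc le_rfl _).2) (sq_nonneg _)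
  suffices ∑ k ∈ Finset.range n, (1 - min (0 : ℝ) 1 ^ (2 * k + 3)) / ((2 * k + 3 : ℕ) : ℝ) ^ 2 ≤
      1 / 4 - 1 / (4 * ((n : ℝ) + 1)) from this.trans (sub_le_self _ (by positivity))
  induction n with
  | zero => simp
  | succ n ih =>
    rw [Finset.sum_range_succ, min_eq_left zero_le_one, zero_pow (by lia), sub_zero]
    have telescope : 1 / ((2 * n + 3 : ℕ) : ℝ) ^ 2 ≤
        1 / (4 * ((n : ℝ) + 1)) - 1 / (4 * ((n : ℝ) + 1 + 1)) := by
      rw [div_sub_div _ _ (by positivity) (by positivity),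
        div_le_div_iff₀ (by positivity) (by positivity)]
      push_cast
      nlinarith
    rw [min_eq_left zero_le_one] at ih
    push_cast at ih telescope ⊢
    linarith

theorem trivialZeroSum_zero_sub_mem_Icc {u : ℝ} (hu : 0 ≤ u) (hu1 : u ≤ 1) :
    trivialZeroSum 0 - trivialZeroSum u ∈ Set.Icc 0 (u ^ 3 / 4) := by
  have hasSum_sub : HasSum (fun k : ℕ => u ^ (2 * k + 3) / ((2 * k + 3 : ℕ) : ℝ) ^ 2)
      (trivialZeroSum 0 - trivialZeroSum u) := by
    refine ((hasSum_trivialZeroSum le_rfl).sub (hasSum_trivialZeroSum hu)).congr_fun fun k => ?_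
    rw [min_eq_left zero_le_one, min_eq_left hu1, zero_pow (by lia)]
    ring
  refine ⟨hasSum_sub.nonneg fun k => by positivity, ?_⟩
  calc trivialZeroSum 0 - trivialZeroSum u ≤ u ^ 3 * trivialZeroSum 0 := by
        refine hasSum_le (fun k => ?_) hasSum_sub ((hasSum_trivialZeroSum le_rfl).mul_left (u ^ 3))
        rw [min_eq_left zero_le_one, zero_pow (by lia), sub_zero, mul_one_div]
        gcongr ?_ / _
        exact pow_le_pow_of_le_one hu hu1 (by lia)
    _ ≤ u ^ 3 / 4 := by
        rw [div_eq_mul_one_div]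
        gcongr
        exact trivialZeroSum_zero_le

/-- The primitive `∫₁ˣ R(t) dt / t` of `R(t) / t`. -/
noncomputable def RfunPrimitive (x : ℝ) : ℝ :=
  logSum (fun n => Λ n / n) x - 1 / 2 * Real.log x ^ 2 + Real.eulerMascheroniConstant * Real.log x

theorem re_xiMellin_inv {x : ℝ} (hx : 1 ≤ x) :
    (xiMellin x⁻¹).re =
      trivialZeroSum x⁻¹ - (deriv (logDeriv entireXi) 1).re - RfunPrimitive x := by
  rw [xiMellin, inv_inv, Real.posLog_eq_log (hx.trans (le_abs_self x)), min_eq_left hx, ofReal_one,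
    mul_one, sub_re, RfunPrimitive]
  simp only [add_re, sub_re, neg_re, ← ofReal_pow, re_mul_ofReal, ofReal_re, div_ofNat_re, one_re]
  ring

theorem exists_abs_RfunPrimitive_sub_le (hRH : RiemannHypothesis) :
    ∃ A : ℝ, ∀ x : ℝ, 1 ≤ x → |RfunPrimitive x - A| ≤
      (2 + Real.eulerMascheroniConstant - Real.log (4 * Real.pi)) / √x + x⁻¹ ^ 3 / 4 := by
  refine ⟨trivialZeroSum 0 - (deriv (logDeriv entireXi) 1).re, fun x hx => ?_⟩
  have abs_re_le := (abs_re_le_norm _).trans (norm_xiMellin_inv_le hRH hx)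
  have trivialZeroSum_mem := trivialZeroSum_zero_sub_mem_Icc
    (inv_nonneg.2 (zero_le_one.trans hx)) (inv_le_one_of_one_le₀ hx)
  rw [re_xiMellin_inv hx] at abs_re_le
  calc |RfunPrimitive x - (trivialZeroSum 0 - (deriv (logDeriv entireXi) 1).re)|
      = |(trivialZeroSum x⁻¹ - (deriv (logDeriv entireXi) 1).re - RfunPrimitive x)
          + (trivialZeroSum 0 - trivialZeroSum x⁻¹)| := by
        rw [← abs_neg]
        ring_nf
    _ ≤ _ := (abs_add_le _ _).trans <| add_le_add abs_re_le <|
        (abs_of_nonneg trivialZeroSum_mem.1).trans_le trivialZeroSum_mem.2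

theorem sum_mul_log_div_le_logSum {a : ℕ → ℝ} (ha : ∀ n, 0 ≤ a n) {x : ℝ} (hx : 0 < x) (N : ℕ) :
    ∑ n ∈ Finset.Icc 1 N, a n * Real.log (x / n) ≤ logSum a x :=
  (Finset.sum_le_sum fun n _ => mul_le_mul_of_nonneg_left (le_max_right _ _) (ha n)).trans <|
    sum_le_hasSum _ (fun n _ => mul_nonneg (ha n) Real.posLog_nonneg) (hasSum_logSum a hx)

/-- `logSum a` is a convex function of `log x` with slope `∑_{n ≤ x} a n` at `x`. -/
theorem log_div_mul_sum_le_logSum_sub {a : ℕ → ℝ} (ha : ∀ n, 0 ≤ a n) {x y : ℝ} (hx : 0 < x)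
    (hy : 0 < y) :
    Real.log (y / x) * ∑ n ∈ Finset.Icc 1 ⌊x⌋₊, a n ≤ logSum a y - logSum a x := by
  refine le_sub_iff_add_le.2 (le_trans (le_of_eq ?_) (sum_mul_log_div_le_logSum ha hy ⌊x⌋₊))
  rw [logSum, Finset.mul_sum, ← Finset.sum_add_distrib]
  refine Finset.sum_congr rfl fun n hn => ?_
  have natCast_ne_zero : (n : ℝ) ≠ 0 := mod_cast Nat.one_le_iff_ne_zero.1 (Finset.mem_Icc.1 hn).1
  rw [Real.log_div hy.ne' hx.ne', Real.log_div hx.ne' natCast_ne_zero,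
    Real.log_div hy.ne' natCast_ne_zero]
  ring

theorem hasDerivWithinAt_logSum (a : ℕ → ℝ) {x : ℝ} (hx : 0 < x) :
    HasDerivWithinAt (logSum a) ((∑ n ∈ Finset.Icc 1 ⌊x⌋₊, a n) / x) (Set.Ioi x) x := by
  have hasDerivAt_sum : HasDerivAt (fun y : ℝ => ∑ n ∈ Finset.Icc 1 ⌊x⌋₊, a n * Real.log (y / n))
      ((∑ n ∈ Finset.Icc 1 ⌊x⌋₊, a n) / x) x := by
    rw [Finset.sum_div]
    refine HasDerivAt.fun_sum fun n hn => ?_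
    have natCast_ne_zero : (n : ℝ) ≠ 0 :=
      mod_cast Nat.one_le_iff_ne_zero.1 (Finset.mem_Icc.1 hn).1
    refine ((((hasDerivAt_id x).div_const (n : ℝ)).log
      (div_ne_zero hx.ne' natCast_ne_zero)).const_mul (a n)).congr_deriv ?_
    simp only [id]
    field_simp
  refine hasDerivAt_sum.hasDerivWithinAt.congr_of_eventuallyEq ?_ rfl
  filter_upwards [Ioo_mem_nhdsGT (Nat.lt_floor_add_one x)] with y hy
  rw [logSum, (Nat.floor_eq_iff (hx.trans hy.1).le).2
    ⟨(Nat.floor_le hx.le).trans hy.1.le, hy.2⟩]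

theorem continuousOn_RfunPrimitive : ContinuousOn RfunPrimitive (Set.Ioi 0) := by
  have continuousOn_log : ContinuousOn Real.log (Set.Ioi 0) :=
    Real.continuousOn_log.mono fun x hx => hx.out.ne'
  exact ((continuousOn_logSum _).sub (continuousOn_const.mul (continuousOn_log.pow 2))).add
    (continuousOn_const.mul continuousOn_log)

theorem hasDerivWithinAt_RfunPrimitive {x : ℝ} (hx : 0 < x) :
    HasDerivWithinAt RfunPrimitive (Rfun x / x) (Set.Ioi x) x := by
  have hasDerivWithinAt_log := (Real.hasDerivAt_log hx.ne').hasDerivWithinAt (s := Set.Ioi x)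
  refine (((hasDerivWithinAt_logSum _ hx).sub ((hasDerivWithinAt_log.pow 2).const_mul
    (1 / 2))).add (hasDerivWithinAt_log.const_mul Real.eulerMascheroniConstant)).congr_deriv ?_
  rw [Rfun]
  simp only [Nat.cast_ofNat, Nat.add_one_sub_one, pow_one]
  ring

theorem log_div_mul_Rfun_sub_le {x y : ℝ} (hx : 0 < x) (hy : 0 < y) :
    Real.log (y / x) * Rfun x - Real.log (y / x) ^ 2 / 2 ≤ RfunPrimitive y - RfunPrimitive x := by
  have convexity := log_div_mul_sum_le_logSum_sub (a := fun n => Λ n / n)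
    (fun n => div_nonneg ArithmeticFunction.vonMangoldt_nonneg n.cast_nonneg) hx hy
  rw [Rfun, RfunPrimitive, RfunPrimitive]
  rw [Real.log_div hy.ne' hx.ne'] at convexity ⊢
  linear_combination convexity

theorem abs_Rfun_le {A M : ℝ} (hM : ∀ t, 1 ≤ t → |RfunPrimitive t - A| ≤ M) {x : ℝ} (hx : 1 ≤ x) :
    |Rfun x| ≤ 2 * M + 1 := by
  have x_pos : 0 < x := one_pos.trans_le hx
  have sub_le {t u : ℝ} (ht : 1 ≤ t) (hu : 1 ≤ u) : RfunPrimitive u - RfunPrimitive t ≤ 2 * M := by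
    linarith [(abs_le.1 (hM t ht)).1, (abs_le.1 (hM u hu)).2]
  have M_nonneg : 0 ≤ M := (abs_nonneg _).trans (hM 1 le_rfl)
  rw [abs_le]
  constructor
  · rcases lt_or_ge x (Real.exp 1) with lt_exp | exp_le
    · have log_lt : Real.log x < 1 := (Real.log_lt_iff_lt_exp x_pos).2 lt_exp
      have sum_nonneg : 0 ≤ ∑ n ∈ Finset.Icc 1 ⌊x⌋₊, Λ n / n := Finset.sum_nonneg fun n _ =>
        div_nonneg ArithmeticFunction.vonMangoldt_nonneg n.cast_nonneg
      rw [Rfun]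
      linarith [Real.one_half_lt_eulerMascheroniConstant]
    · have le_sub := log_div_mul_Rfun_sub_le x_pos (div_pos x_pos (Real.exp_pos 1))
      rw [div_div_cancel_left' x_pos.ne', Real.log_inv, Real.log_exp] at le_sub
      linarith [sub_le hx ((one_le_div (Real.exp_pos 1)).2 exp_le)]
  · have le_sub := log_div_mul_Rfun_sub_le x_pos (mul_pos (Real.exp_pos 1) x_pos)
    rw [mul_div_cancel_right₀ _ x_pos.ne', Real.log_exp] at le_sub
    linarith [sub_le hx (one_le_mul_of_one_le_of_one_le (Real.one_le_exp zero_le_one) hx)]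

theorem measurable_Rfun : Measurable Rfun :=
  (((measurable_from_nat (f := fun N => ∑ n ∈ Finset.Icc 1 N, Λ n / (n : ℝ))).comp
    Nat.measurable_floor).sub Real.measurable_log).add_const _

/-! ### Integration against `1 / (t log² t)` -/

theorem integral_Ioi_of_hasDerivWithinAt_of_tendsto {f f' : ℝ → ℝ} {a m : ℝ}
    (hcont : ContinuousOn f (Set.Ici a))
    (hderiv : ∀ t ∈ Set.Ioi a, HasDerivWithinAt f (f' t) (Set.Ioi t) t)
    (hf' : IntegrableOn f' (Set.Ioi a)) (hf : Tendsto f atTop (𝓝 m)) :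
    ∫ t in Set.Ioi a, f' t = m - f a := by
  refine tendsto_nhds_unique (intervalIntegral_tendsto_integral_Ioi a hf' tendsto_id)
    ((hf.sub_const (f a)).congr' ?_)
  filter_upwards [eventually_ge_atTop a] with b hb
  refine (intervalIntegral.integral_eq_sub_of_hasDeriv_right (hcont.mono ?_) ?_ ?_).symm
  · rw [Set.uIcc_of_le hb]
    exact Set.Icc_subset_Ici_self
  · rw [min_eq_left hb]
    exact fun t ht => hderiv t ht.1
  · exact (intervalIntegrable_iff_integrableOn_Ioc_of_le hb).2
      (hf'.mono_set Set.Ioc_subset_Ioi_self)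

theorem integrableOn_Ioi_inv_mul_log_sq {x : ℝ} (hx : 1 < x) :
    IntegrableOn (fun t => (t * Real.log t ^ 2)⁻¹) (Set.Ioi x) := by
  refine integrableOn_Ioi_deriv_of_nonneg' (g := fun t => -(Real.log t)⁻¹) (fun t ht => ?_)
    (fun t ht => ?_) (tendsto_inv_atTop_zero.comp Real.tendsto_log_atTop).neg
  · have one_lt : 1 < t := hx.trans_le ht
    refine ((Real.hasDerivAt_log (by positivity)).fun_inv
      (Real.log_pos one_lt).ne').neg.congr_deriv ?_
    rw [mul_inv]
    ring
  · have t_pos : 0 < t := zero_lt_one.trans (hx.trans ht)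
    positivity

theorem integrableOn_div_mul_log_sq {f : ℝ → ℝ} (hf : Measurable f) {B x : ℝ} (hx : 1 < x)
    (hB : ∀ t ∈ Set.Ioi x, |f t| ≤ B) :
    IntegrableOn (fun t => f t / (t * Real.log t ^ 2)) (Set.Ioi x) :=
  ((integrableOn_Ioi_inv_mul_log_sq hx).bdd_mul hf.aestronglyMeasurable
    (ae_restrict_of_forall_mem measurableSet_Ioi hB)).congr
    (.of_forall fun _ => (div_eq_mul_inv _ _).symm)

section IntegrationByParts

variable {f F : ℝ → ℝ} {K x : ℝ}

theorem abs_mul_div_mul_log_cube_le (hx : 1 < x) {t : ℝ} (ht : x < t) (hF : |F t| ≤ K / √t) :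
    |2 * F t / (t * Real.log t ^ 3)| ≤ 2 * K / Real.log x ^ 3 * t ^ (-(3 / 2) : ℝ) := by
  have x_pos : 0 < x := one_pos.trans hx
  have t_pos : 0 < t := x_pos.trans ht
  have log_x_pos : 0 < Real.log x := Real.log_pos hx
  have log_t_pos : 0 < Real.log t := Real.log_pos (hx.trans ht)
  have bound_nonneg : 0 ≤ K / √t := (abs_nonneg _).trans hF
  calc |2 * F t / (t * Real.log t ^ 3)| = 2 * |F t| / (t * Real.log t ^ 3) := by
        rw [abs_div, abs_mul, abs_two, abs_of_pos (by positivity : 0 < t * Real.log t ^ 3)]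
    _ ≤ 2 * (K / √t) / (t * Real.log x ^ 3) := by gcongr
    _ = 2 * K / Real.log x ^ 3 * t ^ (-(3 / 2) : ℝ) := by
        rw [show (-(3 / 2) : ℝ) = -(1 + 1 / 2) by norm_num, Real.rpow_neg t_pos.le,
          Real.rpow_add t_pos, Real.rpow_one, ← Real.sqrt_eq_rpow]
        field_simp

theorem integrableOn_mul_div_mul_log_cube (hx : 1 < x) (hcont : ContinuousOn F (Set.Ici x))
    (hF : ∀ t ∈ Set.Ici x, |F t| ≤ K / √t) :
    IntegrableOn (fun t => 2 * F t / (t * Real.log t ^ 3)) (Set.Ioi x) := by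
  refine ((integrableOn_Ioi_rpow_of_lt (by norm_num) (one_pos.trans hx)).const_mul
    (2 * K / Real.log x ^ 3)).mono' (ContinuousOn.aestronglyMeasurable ?_ measurableSet_Ioi)
    (ae_restrict_of_forall_mem measurableSet_Ioi fun t ht =>
      abs_mul_div_mul_log_cube_le hx ht (hF t ht.out.le))
  have pos {t : ℝ} (ht : t ∈ Set.Ioi x) : 0 < t := (one_pos.trans hx).trans ht
  exact (continuousOn_const.mul (hcont.mono Set.Ioi_subset_Ici_self)).div
    (continuousOn_id.mul ((Real.continuousOn_log.mono fun t ht => (pos ht).ne').pow 3))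
    fun t ht => (mul_pos (pos ht) (pow_pos (Real.log_pos (hx.trans ht)) 3)).ne'

theorem abs_integral_mul_div_mul_log_cube_le (hx : 1 < x)
    (hF : ∀ t ∈ Set.Ici x, |F t| ≤ K / √t) :
    |∫ t in Set.Ioi x, 2 * F t / (t * Real.log t ^ 3)| ≤ 4 * K / (√x * Real.log x ^ 3) := by
  have x_pos : 0 < x := one_pos.trans hx
  rw [← Real.norm_eq_abs]
  refine (norm_integral_le_of_norm_le
    ((integrableOn_Ioi_rpow_of_lt (by norm_num) x_pos).const_mul (2 * K / Real.log x ^ 3))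
    (ae_restrict_of_forall_mem measurableSet_Ioi fun t ht =>
      abs_mul_div_mul_log_cube_le hx ht (hF t ht.out.le))).trans_eq ?_
  rw [integral_const_mul, integral_Ioi_rpow_of_lt (by norm_num) x_pos,
    show (-(3 / 2) + 1 : ℝ) = -(1 / 2) by norm_num, Real.rpow_neg x_pos.le, ← Real.sqrt_eq_rpow]
  field_simp
  ring

theorem tendsto_div_log_sq (hF : ∀ t ∈ Set.Ici x, |F t| ≤ K / √t) :
    Tendsto (fun t => F t / Real.log t ^ 2) atTop (𝓝 0) := by
  have tendsto_bound : Tendsto (fun t => K / √t) atTop (𝓝 0) :=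
    tendsto_const_nhds.div_atTop Real.tendsto_sqrt_atTop
  exact (squeeze_zero_norm' (f := F) (eventually_atTop.2 ⟨x, hF⟩) tendsto_bound).div_atTop
    ((tendsto_pow_atTop two_ne_zero).comp Real.tendsto_log_atTop)

theorem integral_div_mul_log_sq_eq (hx : 1 < x) (hcont : ContinuousOn F (Set.Ici x))
    (hderiv : ∀ t ∈ Set.Ioi x, HasDerivWithinAt F (f t / t) (Set.Ioi t) t)
    (hF : ∀ t ∈ Set.Ici x, |F t| ≤ K / √t)
    (hf : IntegrableOn (fun t => f t / (t * Real.log t ^ 2)) (Set.Ioi x)) :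
    ∫ t in Set.Ioi x, f t / (t * Real.log t ^ 2) =
      -(F x / Real.log x ^ 2) + ∫ t in Set.Ioi x, 2 * F t / (t * Real.log t ^ 3) := by
  have integrable_cube := integrableOn_mul_div_mul_log_cube hx hcont hF
  rw [← sub_eq_iff_eq_add, ← integral_sub hf integrable_cube, ← zero_sub]
  have pos {t : ℝ} (ht : t ∈ Set.Ici x) : 0 < t := (one_pos.trans hx).trans_le ht
  have log_pos {t : ℝ} (ht : t ∈ Set.Ici x) : 0 < Real.log t := Real.log_pos (hx.trans_le ht)
  refine integral_Ioi_of_hasDerivWithinAt_of_tendsto ?_ (fun t ht => ?_)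
    (hf.sub integrable_cube) (tendsto_div_log_sq hF)
  · exact hcont.div ((Real.continuousOn_log.mono fun t ht => (pos ht).ne').pow 2) fun t ht =>
      (pow_pos (log_pos ht) 2).ne'
  · have t_pos := pos ht.out.le
    have log_t_pos := log_pos ht.out.le
    refine ((hderiv t ht).fun_div ((Real.hasDerivAt_log t_pos.ne').hasDerivWithinAt.fun_pow 2)
      (pow_pos log_t_pos 2).ne').congr_deriv ?_
    simp only [Pi.sub_apply]
    field_simp
    ring

theorem abs_integral_div_mul_log_sq_le (hx : 1 < x) (hcont : ContinuousOn F (Set.Ici x))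
    (hderiv : ∀ t ∈ Set.Ioi x, HasDerivWithinAt F (f t / t) (Set.Ioi t) t)
    (hF : ∀ t ∈ Set.Ici x, |F t| ≤ K / √t)
    (hf : IntegrableOn (fun t => f t / (t * Real.log t ^ 2)) (Set.Ioi x)) :
    |∫ t in Set.Ioi x, f t / (t * Real.log t ^ 2)| ≤
      K / (√x * Real.log x ^ 2) * (1 + 4 / Real.log x) := by
  have log_pos : 0 < Real.log x := Real.log_pos hx
  have boundary_le : |-(F x / Real.log x ^ 2)| ≤ K / √x / Real.log x ^ 2 := by
    rw [abs_neg, abs_div, abs_sq]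
    gcongr
    exact hF x Set.self_mem_Ici
  rw [integral_div_mul_log_sq_eq hx hcont hderiv hF hf]
  refine (abs_add_le _ _).trans <|
    (add_le_add boundary_le (abs_integral_mul_div_mul_log_cube_le hx hF)).trans_eq ?_
  field_simp

end IntegrationByParts

theorem integrableOn_Rfun_div_mul_log_sq (hRH : RiemannHypothesis) {x : ℝ} (hx : 1 < x) :
    IntegrableOn (fun t => Rfun t / (t * Real.log t ^ 2)) (Set.Ioi x) := by
  obtain ⟨A, abs_sub_le⟩ := exists_abs_RfunPrimitive_sub_le hRH
  set C := 2 + Real.eulerMascheroniConstant - Real.log (4 * Real.pi)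
  refine integrableOn_div_mul_log_sq measurable_Rfun (B := 2 * (|C| + 1 / 4) + 1) hx fun t ht =>
    abs_Rfun_le (fun u hu => (abs_sub_le u hu).trans (add_le_add ?_ ?_)) (hx.trans ht).le
  · exact (div_le_div_of_nonneg_right (le_abs_self C) (Real.sqrt_nonneg u)).trans
      (div_le_self (abs_nonneg C) (Real.one_le_sqrt.2 hu))
  · have inv_pow_le : u⁻¹ ^ 3 ≤ 1 :=
      pow_le_one₀ (inv_nonneg.2 (zero_le_one.trans hu)) (inv_le_one_of_one_le₀ hu)
    gcongr

theorem inv_pow_three_div_four_le {x t : ℝ} (hx : 0 < x) (hxt : x ≤ t) :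
    t⁻¹ ^ 3 / 4 ≤ 1 / (4 * x ^ 2 * √x) / √t := by
  have t_pos : 0 < t := hx.trans_le hxt
  calc t⁻¹ ^ 3 / 4 = 1 / (4 * t ^ 2 * √t) / √t := by
        rw [div_div, mul_assoc _ (√t), Real.mul_self_sqrt t_pos.le]
        field_simp
    _ ≤ 1 / (4 * x ^ 2 * √x) / √t := by gcongr

theorem Hfun_bound_of_RH_general (hRH : RiemannHypothesis) (x : ℝ) (hx : 1 < x) :
    |Hfun x| ≤ (2 + Real.eulerMascheroniConstant - Real.log (4 * Real.pi) +
      1 / (4 * x ^ 2 * √x)) / (√x * Real.log x ^ 2) * (1 + 4 / Real.log x) := by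
  have x_pos : 0 < x := one_pos.trans hx
  obtain ⟨A, abs_sub_le⟩ := exists_abs_RfunPrimitive_sub_le hRH
  refine abs_integral_div_mul_log_sq_le (F := fun t => RfunPrimitive t - A) hx ?_ (fun t ht => ?_)
    (fun t ht => ?_) (integrableOn_Rfun_div_mul_log_sq hRH hx)
  · exact (continuousOn_RfunPrimitive.mono fun t ht => x_pos.trans_le ht).sub continuousOn_const
  · exact (hasDerivWithinAt_RfunPrimitive (x_pos.trans ht)).sub_const A
  · rw [add_div]
    exact (abs_sub_le t (hx.le.trans ht)).trans (by grw [inv_pow_three_div_four_le x_pos ht])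

theorem bound_constant_le {x : ℝ} (hx : 100 ≤ x) :
    2 + Real.eulerMascheroniConstant - Real.log (4 * Real.pi) + 1 / (4 * x ^ 2 * √x) ≤ 0.0462 := by
  have one_div_le : 1 / (4 * x ^ 2 * √x) ≤ 1 / (4 * 100 ^ 2 * 10) := by
    gcongr
    exact Real.le_sqrt_of_sq_le (by linarith)
  linarith [eulerMascheroniConstant_sub_log_four_pi_le]

/-- On RH, `|H(x)| ≤ (0.0462/(√x (log x)^2)) (1 + 4/log x)` for `x ≥ 100`. -/
theorem Hfun_bound_of_RH (hRH : RiemannHypothesis) (x : ℝ) (hx : 100 ≤ x) :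
    |Hfun x| ≤ 0.0462 / (Real.sqrt x * (Real.log x) ^ 2) * (1 + 4 / Real.log x) := by
  have log_pos : 0 < Real.log x := Real.log_pos (by linarith)
  exact (Hfun_bound_of_RH_general hRH x (by linarith)).trans
    (by grw [bound_constant_le hx])
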